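/- arXiv:2107.08830 — 4 statements merged into one kernel-verified Lean document; each statement's English description precedes it below -/
import Mathlib

section
/- Let λ ∈ ℂ with Re λ < 0 and write λ₁ = −Re λ > 0. Let γ denote the Euler–Mascheroni constant and let t₀ > e^{1−γ}. Define f₁ : (0,1) → ℂ by f₁(ρ) = −1/(λ · t₀^ρ · Γ(1−ρ)), where Γ is the Gamma function. Then for every ρ ∈ (0,1) the function f₁ is differentiable at ρ and −Re(f₁′(ρ)) ≥ λ₁ / (|λ|² · t₀^ρ). -/
lemma aux_gamma (s : ℝ) (h0 : 0 < s) (h1 : s < 1) :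
    Real.Gamma s ≤ 1 - Real.eulerMascheroniConstant - deriv Real.Gamma s / Real.Gamma s := by
  have hd : ∀ x : ℝ, 0 < x → DifferentiableAt ℝ Real.Gamma x := fun x hx =>
    Real.differentiableAt_Gamma (fun m => by
      have : (0 : ℝ) ≤ m := Nat.cast_nonneg m
      linarith)
  have hg : 0 < Real.Gamma s := Real.Gamma_pos_of_pos h0
  have hg1 : 0 < Real.Gamma (s + 1) := Real.Gamma_pos_of_pos (by linarith)
  have hle : Real.Gamma (s + 1) ≤ 1 := by
    have h := Real.convexOn_Gamma.2 (Set.mem_Ioi.2 (one_pos : (0 : ℝ) < 1))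
      (Set.mem_Ioi.2 (two_pos : (0 : ℝ) < 2)) (by linarith : 0 ≤ 1 - s) h0.le (by ring)
    simp only [smul_eq_mul, Real.Gamma_one, Real.Gamma_two] at h
    have e : (1 - s) * 1 + s * 2 = s + 1 := by ring
    rw [e] at h
    linarith
  have hfe : Real.Gamma (s + 1) = s * Real.Gamma s := Real.Gamma_add_one h0.ne'
  have hder : deriv Real.Gamma (s + 1) = Real.Gamma s + s * deriv Real.Gamma s := by
    have a1 : HasDerivAt (fun x : ℝ => Real.Gamma (x + 1)) (deriv Real.Gamma (s + 1)) s :=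
      (hd (s + 1) (by linarith)).hasDerivAt.comp_add_const s 1
    have a2 : HasDerivAt (fun x : ℝ => x * Real.Gamma x)
        (1 * Real.Gamma s + s * deriv Real.Gamma s) s :=
      (hasDerivAt_id s).mul (hd s h0).hasDerivAt
    have a3 : (fun x : ℝ => Real.Gamma (x + 1)) =ᶠ[nhds s] fun x : ℝ => x * Real.Gamma x := by
      filter_upwards [lt_mem_nhds h0] with x hx
      exact Real.Gamma_add_one hx.ne'
    have := a1.unique (a2.congr_of_eventuallyEq a3)
    linarith
  have hlog : ∀ x : ℝ, 0 < x → HasDerivAt (Real.log ∘ Real.Gamma)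
      (deriv Real.Gamma x / Real.Gamma x) x := fun x hx =>
    (hd x hx).hasDerivAt.log (Real.Gamma_pos_of_pos hx).ne'
  have hmono : deriv Real.Gamma (s + 1) / Real.Gamma (s + 1) ≤
      deriv Real.Gamma 2 / Real.Gamma 2 := by
    have h := Real.convexOn_log_Gamma.monotoneOn_deriv
      (fun x hx => (hlog x hx).differentiableAt)
      (a := s + 1) (b := 2) (Set.mem_Ioi.2 (by linarith)) (Set.mem_Ioi.2 (by norm_num))
      (by linarith)
    rwa [(hlog (s + 1) (by linarith)).deriv, (hlog 2 (by norm_num)).deriv] at h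
  have h2 : deriv Real.Gamma 2 = 1 - Real.eulerMascheroniConstant := by
    have := Real.deriv_Gamma_nat 1
    norm_num [harmonic] at this
    linarith
  rw [h2, Real.Gamma_two, div_one, div_le_iff₀ hg1, hder, hfe] at hmono
  rw [hfe] at hle
  have : Real.Gamma s * Real.Gamma s ≤
      (1 - Real.eulerMascheroniConstant) * Real.Gamma s - deriv Real.Gamma s := by
    have h3 : s * (Real.Gamma s * Real.Gamma s) ≤
      s * ((1 - Real.eulerMascheroniConstant) * Real.Gamma s - deriv Real.Gamma s) := by
      nlinarith
    exact le_of_mul_le_mul_left h3 h0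
  rw [le_sub_iff_add_le, ← le_sub_iff_add_le', div_le_iff₀ hg]
  linarith


/-- **Estimate (Rf1).** For `λ ∈ ℂ` with `λ₁ = −Re λ > 0` and
`t₀ > e^{1−γ}` (with `γ` the Euler–Mascheroni constant), the function
`f₁(ρ) = −1/(λ t₀^ρ Γ(1−ρ))` is differentiable on `(0,1)` and satisfies
`−Re f₁′(ρ) ≥ λ₁ / (|λ|² t₀^ρ)`. -/
theorem f1_derivative_estimate (l : ℂ) (hl : l.re < 0)
    (t₀ : ℝ) (ht₀ : Real.exp (1 - Real.eulerMascheroniConstant) < t₀) :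
    ∀ ρ ∈ Set.Ioo (0 : ℝ) 1,
      DifferentiableAt ℝ
        (fun ρ : ℝ => -1 / (l * ((t₀ ^ ρ : ℝ) : ℂ) * ((Real.Gamma (1 - ρ) : ℝ) : ℂ))) ρ ∧
      (-l.re) / (‖l‖ ^ 2 * t₀ ^ ρ) ≤
        -(deriv (fun ρ : ℝ =>
            -1 / (l * ((t₀ ^ ρ : ℝ) : ℂ) * ((Real.Gamma (1 - ρ) : ℝ) : ℂ))) ρ).re := by
  intro ρ hρ
  obtain ⟨h0, h1⟩ := hρ
  have ht : 0 < t₀ := (Real.exp_pos _).trans ht₀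
  have hlt : 1 - Real.eulerMascheroniConstant < Real.log t₀ := (Real.lt_log_iff_exp_lt ht).2 ht₀
  have hg : 0 < Real.Gamma (1 - ρ) := Real.Gamma_pos_of_pos (by linarith)
  have hp : 0 < t₀ ^ ρ := Real.rpow_pos_of_pos ht ρ
  have hl0 : l ≠ 0 := by
    rintro rfl
    simp at hl
  have hn : 0 < ‖l‖ ^ 2 := by positivity
  have key := aux_gamma (1 - ρ) (by linarith) (by linarith)
  set D := deriv Real.Gamma (1 - ρ) with hD
  have hdG : HasDerivAt (fun x : ℝ => Real.Gamma (1 - x)) (-D) ρ := by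
    have : DifferentiableAt ℝ Real.Gamma (1 - ρ) := Real.differentiableAt_Gamma (fun m => by
      have : (0 : ℝ) ≤ m := Nat.cast_nonneg m
      linarith)
    exact this.hasDerivAt.comp_const_sub 1 ρ
  have hdp : HasDerivAt (fun x : ℝ => t₀ ^ x) (t₀ ^ ρ * Real.log t₀) ρ :=
    (Real.hasStrictDerivAt_const_rpow ht ρ).hasDerivAt
  have hdr := (hdp.mul hdG).inv (mul_pos hp hg).ne'
  have hdc := (hdr.ofReal_comp).const_mul (-l⁻¹)
  have hfun : (fun ρ : ℝ => -1 / (l * ((t₀ ^ ρ : ℝ) : ℂ) * ((Real.Gamma (1 - ρ) : ℝ) : ℂ))) =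
      fun y : ℝ => -l⁻¹ * (((((fun x : ℝ => t₀ ^ x) * fun x : ℝ => Real.Gamma (1 - x))⁻¹) y : ℝ) : ℂ) := by
    funext y
    simp only [Pi.inv_apply, Pi.mul_apply, Complex.ofReal_inv, Complex.ofReal_mul]
    rw [mul_assoc, neg_div, one_div, mul_inv, neg_mul]
  rw [hfun]
  refine ⟨hdc.differentiableAt, ?_⟩
  rw [hdc.deriv, Complex.re_mul_ofReal, Complex.neg_re, Complex.inv_re, Complex.normSq_eq_norm_sq]
  simp only [Pi.mul_apply]
  set G := Real.Gamma (1 - ρ)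
  set P := t₀ ^ ρ
  have e : -(-(l.re / ‖l‖ ^ 2) * (-(P * Real.log t₀ * G + P * -D) / (P * G) ^ 2)) =
      (-l.re) / (‖l‖ ^ 2 * P) * ((Real.log t₀ - D / G) / G) := by
    field_simp
    ring
  rw [e]
  refine le_mul_of_one_le_right (div_nonneg (by linarith) (by positivity)) ?_
  rw [one_le_div hg]
  linarith
end

section
/- Let λ ∈ ℂ with Re λ < 0 and |Re λ| ≠ |Im λ|; write λ₁ = −Re λ > 0 and λ₂ = Im λ. Let 0 < β₀ < 1 and let γ denote the Euler–Mascheroni constant. Define g₁ : (0,1) → ℂ by g₁(ρ) = −1/(λ² · t₀^{ρ+1} · Γ(−ρ)), where Γ is the (real) Gamma function evaluated at the negative non-integer −ρ. Then for every t₀ ≥ e^{1−γ}·e^{2/β₀} and every ρ ∈ [β₀, 1), g₁ is differentiable at ρ and sign(λ₁² − λ₂²) · Re(g₁′(ρ)) ≤ −|λ₁² − λ₂²| / (|λ|⁴ · t₀^{ρ+1}). -/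
theorem aux_psi (x : ℝ) (hx : 1 < x) (hx2 : x ≤ 2) :
    deriv Real.Gamma x ≤ (1 - Real.eulerMascheroniConstant) * Real.Gamma x := by
  have hd : ∀ y : ℝ, 0 < y → DifferentiableAt ℝ Real.Gamma y := fun y hy =>
    Real.differentiableAt_Gamma (fun m => by
      have : (0:ℝ) ≤ m := Nat.cast_nonneg m
      intro h; linarith)
  have hD : ∀ y : ℝ, 0 < y → HasDerivAt (Real.log ∘ Real.Gamma)
      (deriv Real.Gamma y / Real.Gamma y) y := fun y hy =>
    (hd y hy).hasDerivAt.log (Real.Gamma_pos_of_pos hy).ne'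
  have hm := Real.convexOn_log_Gamma.monotoneOn_deriv
    (fun y hy => (hD y hy).differentiableAt)
  have h := hm (show x ∈ Set.Ioi 0 from by simp; linarith)
    (show (2:ℝ) ∈ Set.Ioi 0 from by simp) hx2
  rw [(hD x (by linarith)).deriv, (hD 2 (by norm_num)).deriv] at h
  have h2 := Real.deriv_Gamma_nat 1
  norm_num [harmonic] at h2
  have g2 : Real.Gamma 2 = 1 := Real.Gamma_two
  rw [h2, g2, div_le_iff₀ (Real.Gamma_pos_of_pos (by linarith))] at h
  linarith

theorem aux_gamma_le (x : ℝ) (hx : 1 ≤ x) (hx2 : x ≤ 2) : Real.Gamma x ≤ 1 := by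
  have h := Real.convexOn_Gamma.2 (show (1:ℝ) ∈ Set.Ioi 0 from by simp)
    (show (2:ℝ) ∈ Set.Ioi 0 from by simp) (show 0 ≤ 2 - x by linarith)
    (show 0 ≤ x - 1 by linarith) (by ring)
  simp only [smul_eq_mul, Real.Gamma_one, Real.Gamma_two] at h
  rw [show (2 - x) * 1 + (x - 1) * 2 = x by ring] at h
  linarith

theorem aux_k (t β ρ : ℝ) (hβ : 0 < β) (h1 : β ≤ ρ) (h2 : ρ < 1)
    (ht : Real.exp (1 - Real.eulerMascheroniConstant) * Real.exp (2 / β) ≤ t) :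
    ∃ d : ℝ, HasDerivAt (fun r : ℝ => -1 / (t ^ (r + 1) * Real.Gamma (-r))) d ρ ∧
      d ≤ -1 / t ^ (ρ + 1) := by
  have ht0 : 0 < t := lt_of_lt_of_le (by positivity) ht
  have hρ : 0 < ρ := by linarith
  have hlog : 1 - Real.eulerMascheroniConstant + 2 / ρ ≤ Real.log t := by
    have : 1 - Real.eulerMascheroniConstant + 2 / β ≤ Real.log t := by
      rw [Real.le_log_iff_exp_le ht0, Real.exp_add]; exact ht
    have : 2 / ρ ≤ 2 / β := by gcongr
    linarith
  have hG0 : 0 < Real.Gamma (2 - ρ) := Real.Gamma_pos_of_pos (by linarith)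
  have hψ := aux_psi (2 - ρ) (by linarith) (by linarith)
  have hG1 := aux_gamma_le (2 - ρ) (by linarith) (by linarith)
  have hdG : HasDerivAt Real.Gamma (deriv Real.Gamma (2 - ρ)) (2 - ρ) :=
    (Real.differentiableAt_Gamma (fun m => by
      have : (0:ℝ) ≤ m := Nat.cast_nonneg m
      intro h; linarith)).hasDerivAt
  set D := deriv Real.Gamma (2 - ρ)
  set G := Real.Gamma (2 - ρ) with hG
  have e1 : HasDerivAt (fun r : ℝ => Real.Gamma (2 - r)) (-D) ρ := by
    have := hdG.comp ρ ((hasDerivAt_id ρ).const_sub 2)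
    rw [mul_neg_one] at this
    exact this
  have e2 : HasDerivAt (fun r : ℝ => t ^ (r + 1)) (t ^ (ρ + 1) * Real.log t) ρ := by
    have := ((hasDerivAt_id ρ).add_const 1).const_rpow ht0
    simpa [mul_comm] using this
  have e3 : HasDerivAt (fun r : ℝ => r * (1 - r)) (1 - 2 * ρ) ρ := by
    have := (hasDerivAt_id ρ).mul ((hasDerivAt_id ρ).const_sub 1)
    exact this.congr_deriv (by simp only [id]; ring)
  have hT : 0 < t ^ (ρ + 1) := Real.rpow_pos_of_pos ht0 _
  have e4 := e3.div (e2.mul e1) (mul_pos hT hG0).ne'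
  refine ⟨_, e4.congr_of_eventuallyEq ?_, ?_⟩
  · filter_upwards [Ioo_mem_nhds hρ h2] with r hr
    have a1 := Real.Gamma_add_one (s := -r) (by linarith [hr.1])
    have a2 := Real.Gamma_add_one (s := 1 - r) (by linarith [hr.2])
    have a3 : Real.Gamma (2 - r) = (1 - r) * (-r * Real.Gamma (-r)) := by
      rw [← a1, show -r + 1 = 1 - r by ring, ← a2]; congr 1; ring
    have hr0 : r ≠ 0 := hr.1.ne'
    have hr1 : 1 - r ≠ 0 := by linarith [hr.2]
    have hg : Real.Gamma (-r) ≠ 0 := by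
      intro h
      rw [h] at a3
      have := Real.Gamma_pos_of_pos (show 0 < 2 - r by linarith [hr.2])
      simp at a3; linarith
    have hT' : t ^ (r + 1) ≠ 0 := (Real.rpow_pos_of_pos ht0 _).ne'
    simp only [Pi.div_apply, Pi.mul_apply]
    rw [a3]
    field_simp
  · simp only [Pi.mul_apply]
    rw [← hG]
    set T := t ^ (ρ + 1)
    rw [div_le_div_iff₀ (by positivity) hT]
    have key : (1 - 2 * ρ) * G - ρ * (1 - ρ) * (Real.log t * G - D) ≤ -(G ^ 2) := by
      have b1 : 2 / ρ * G ≤ Real.log t * G - D := by nlinarith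
      have b2 : ρ * (1 - ρ) * (2 / ρ * G) ≤ ρ * (1 - ρ) * (Real.log t * G - D) :=
        mul_le_mul_of_nonneg_left b1 (mul_nonneg hρ.le (by linarith))
      have b3 : ρ * (1 - ρ) * (2 / ρ * G) = 2 * (1 - ρ) * G := by field_simp
      nlinarith
    have := mul_le_mul_of_nonneg_left key (mul_pos hT hT).le
    nlinarith


/-- **Estimate (f11).** For `λ ∈ ℂ` with `λ₁ = −Re λ > 0`, `λ₂ = Im λ`,
`|λ₁| ≠ |λ₂|`, `0 < β₀ < 1` and `t₀ ≥ e^{1−γ} e^{2/β₀}` (with `γ` the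
Euler–Mascheroni constant), the function `g₁(ρ) = −1/(λ² t₀^{ρ+1} Γ(−ρ))` is
differentiable on `[β₀, 1)` and satisfies
`sign(λ₁² − λ₂²) · Re g₁′(ρ) ≤ −|λ₁² − λ₂²| / (|λ|⁴ t₀^{ρ+1})`. -/
theorem g1_derivative_estimate (l : ℂ) (hl : l.re < 0) (hl' : |l.re| ≠ |l.im|)
    (β₀ : ℝ) (hβ₀ : 0 < β₀) (hβ₀1 : β₀ < 1)
    (t₀ : ℝ)
    (ht₀ : Real.exp (1 - Real.eulerMascheroniConstant) * Real.exp (2 / β₀) ≤ t₀) :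
    ∀ ρ ∈ Set.Ico β₀ 1,
      DifferentiableAt ℝ
        (fun ρ : ℝ => -1 / (l ^ 2 * ((t₀ ^ (ρ + 1) : ℝ) : ℂ) *
          ((Real.Gamma (-ρ) : ℝ) : ℂ))) ρ ∧
      Real.sign ((-l.re) ^ 2 - l.im ^ 2) *
          (deriv (fun ρ : ℝ => -1 / (l ^ 2 * ((t₀ ^ (ρ + 1) : ℝ) : ℂ) *
            ((Real.Gamma (-ρ) : ℝ) : ℂ))) ρ).re ≤
        -|(-l.re) ^ 2 - l.im ^ 2| / (‖l‖ ^ 4 * t₀ ^ (ρ + 1)) := by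
  intro ρ hρ
  obtain ⟨d, hd, hle⟩ := aux_k t₀ β₀ ρ hβ₀ hρ.1 hρ.2 ht₀
  have ht0 : 0 < t₀ := lt_of_lt_of_le (by positivity) ht₀
  have hT : 0 < t₀ ^ (ρ + 1) := Real.rpow_pos_of_pos ht0 _
  have hD : HasDerivAt (fun ρ : ℝ => -1 / (l ^ 2 * ((t₀ ^ (ρ + 1) : ℝ) : ℂ) *
          ((Real.Gamma (-ρ) : ℝ) : ℂ))) ((l ^ 2)⁻¹ * (d : ℂ)) ρ := by
    have := (hd.ofReal_comp).const_mul ((l ^ 2)⁻¹)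
    refine this.congr_of_eventuallyEq (Filter.Eventually.of_forall fun r => ?_)
    push_cast
    simp only [div_eq_mul_inv, mul_inv]
    ring
  refine ⟨hD.differentiableAt, ?_⟩
  rw [hD.deriv]
  have hl0 : l ≠ 0 := by rintro rfl; simp at hl
  have hn : 0 < ‖l‖ ^ 4 := by positivity
  have hre : ((l ^ 2)⁻¹ * (d : ℂ)).re = ((-l.re) ^ 2 - l.im ^ 2) / ‖l‖ ^ 4 * d := by
    rw [Complex.re_mul_ofReal, Complex.inv_re, Complex.normSq_eq_norm_sq, norm_pow]
    congr 2
    · simp [pow_two]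
    · ring
  rw [hre]
  set A := (-l.re) ^ 2 - l.im ^ 2
  have hs : Real.sign A * A = |A| := by
    rcases lt_trichotomy A 0 with h | h | h
    · rw [Real.sign_of_neg h, abs_of_neg h]; ring
    · simp [h]
    · rw [Real.sign_of_pos h, abs_of_pos h]; ring
  calc Real.sign A * (A / ‖l‖ ^ 4 * d) = |A| / ‖l‖ ^ 4 * d := by rw [← hs]; ring
    _ ≤ |A| / ‖l‖ ^ 4 * (-1 / t₀ ^ (ρ + 1)) := by gcongr
    _ = _ := by field_simp
end

section
/- Let 0 < β₀ < 1, let λ ∈ ℂ with Re λ < 0, write λ₁ = −Re λ > 0, and let γ denote the Euler–Mascheroni constant. Then there exists a constant C > 0 (depending only on λ and β₀) such that for every t₀ > e^{1−γ} and every ρ ∈ [β₀, 1), the function ρ ↦ E_ρ(λ·t₀^ρ) is differentiable at ρ and Re(d/dρ [E_ρ(λ·t₀^ρ)]) < −λ₁/(|λ|²·t₀^ρ) + C·(1/ρ + ln t₀)/(|λ|·t₀^ρ)². -/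
/-- The (one-parameter) Mittag-Leffler function `E_β(z) = ∑ₖ zᵏ / Γ(βk + 1)`. -/
noncomputable def mittagLeffler (β : ℝ) (z : ℂ) : ℂ :=
  ∑' k : ℕ, z ^ k / Complex.Gamma (β * k + 1)

open MeasureTheory Set Filter Topology

namespace CapEst

lemma int_base {c δ : ℝ} (hc : 0 < c) (hδ : 0 < δ) :
    Integrable (fun x : ℝ => Real.exp (c * x) * Real.exp (-(δ * Real.exp x))) := by
  have h1 : IntegrableOn (fun x : ℝ => Real.exp (-(δ * x)) * x ^ (c - 1)) (Ioi 0) := by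
    have := Real.GammaIntegral_convergent hc
    have h2 := (integrableOn_Ioi_comp_mul_left_iff
      (fun x : ℝ => Real.exp (-x) * x ^ (c - 1)) 0 hδ).2 (by simpa using this)
    have h3 := h2.const_mul ((δ ^ (c - 1))⁻¹)
    refine IntegrableOn.congr_fun h3 (fun x hx => ?_) measurableSet_Ioi
    rw [Real.mul_rpow hδ.le (le_of_lt hx)]
    have : δ ^ (c - 1) ≠ 0 := (Real.rpow_pos_of_pos hδ _).ne'
    field_simp
  have h4 := (integrableOn_image_iff_integrableOn_abs_deriv_smul (s := univ) (f := Real.exp)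
    (f' := Real.exp) MeasurableSet.univ (fun x _ => (Real.hasDerivAt_exp x).hasDerivWithinAt)
    (Real.exp_injective.injOn) (fun x : ℝ => Real.exp (-(δ * x)) * x ^ (c - 1))).1
    (by rw [image_univ, Real.range_exp]; exact h1)
  rw [integrableOn_univ] at h4
  refine h4.congr (Eventually.of_forall fun x => ?_)
  simp only [smul_eq_mul, abs_of_pos (Real.exp_pos x)]
  rw [← Real.exp_mul, mul_left_comm, ← Real.exp_add, mul_comm]
  congr 2; ring

lemma tendsto_top (c : ℝ) {δ : ℝ} (hδ : 0 < δ) :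
    Tendsto (fun x : ℝ => Real.exp (c * x) * Real.exp (-(δ * Real.exp x))) atTop (𝓝 0) := by
  refine ((tendsto_rpow_mul_exp_neg_mul_atTop_nhds_zero c δ hδ).comp
    Real.tendsto_exp_atTop).congr (fun x => ?_)
  simp only [Function.comp]
  rw [← Real.exp_mul, mul_comm x c, neg_mul]

lemma tendsto_bot {c : ℝ} (hc : 0 < c) :
    Tendsto (fun x : ℝ => Real.exp (c * x)) atBot (𝓝 0) :=
  Real.tendsto_exp_atBot.comp (tendsto_id.const_mul_atBot hc)

noncomputable def F (a : ℝ) (w : ℂ) : ℂ := Complex.exp (Complex.exp w) * Complex.exp (-a * w)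

lemma norm_F (a x φ : ℝ) : ‖F a (x + φ * Complex.I)‖ =
    Real.exp (-a * x) * Real.exp (Real.exp x * Real.cos φ) := by
  rw [F, norm_mul, Complex.norm_exp, Complex.norm_exp, mul_comm, Complex.exp_re]
  simp

lemma F_diff (a : ℝ) : Differentiable ℂ (F a) := by
  unfold F; fun_prop

lemma F_cont (a : ℝ) : Continuous (F a) := (F_diff a).continuous

lemma norm_F_le {a x φ δ : ℝ} (h : Real.cos φ ≤ -δ) : ‖F a (x + φ * Complex.I)‖ ≤
    Real.exp (-a * x) * Real.exp (-(δ * Real.exp x)) := by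
  rw [norm_F]
  gcongr
  nlinarith [Real.exp_pos x]

lemma F_int {c φ : ℝ} (hc : 0 < c) (hφ : Real.cos φ < 0) :
    Integrable (fun x : ℝ => F (-c) (x + φ * Complex.I)) := by
  refine (int_base hc (neg_pos.2 hφ)).mono' ?_ (Eventually.of_forall fun x => ?_)
  · exact ((F_cont _).comp (by fun_prop)).aestronglyMeasurable
  · refine (norm_F_le (δ := -Real.cos φ) (by simp)).trans (by simp)

lemma vert_tendsto (f : ℂ → ℂ) (α β : ℝ) (hαβ : α ≤ β) (l : Filter ℝ) (b : ℝ → ℝ)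
    (hb : Tendsto b l (𝓝 0))
    (h : ∀ᶠ x : ℝ in l, ∀ y ∈ Icc α β, ‖f (x + (y : ℝ) * Complex.I)‖ ≤ b x) :
    Tendsto (fun x : ℝ => ∫ y in α..β, f (x + (y : ℝ) * Complex.I)) l (𝓝 0) := by
  have h2 : Tendsto (fun x => b x * |β - α|) l (𝓝 0) := by simpa using hb.mul_const (|β - α|)
  refine squeeze_zero_norm' (h.mono fun x hx => ?_) h2
  refine intervalIntegral.norm_integral_le_of_norm_le_const (fun y hy => hx y ?_)
  rw [uIoc_of_le hαβ] at hy
  exact ⟨hy.1.le, hy.2⟩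

lemma ray_eq {c α β δ : ℝ} (hc : 0 < c) (hδ : 0 < δ) (hαβ : α ≤ β)
    (h : ∀ y ∈ Icc α β, Real.cos y ≤ -δ) :
    ∫ x : ℝ, F (-c) (x + α * Complex.I) = ∫ x : ℝ, F (-c) (x + β * Complex.I) := by
  have hA := F_int hc (φ := α) (by linarith [h α ⟨le_refl _, hαβ⟩])
  have hB := F_int hc (φ := β) (by linarith [h β ⟨hαβ, le_refl _⟩])
  have key : ∀ x : ℝ, (∫ u in (-x)..x, F (-c) ((u : ℝ) + α * Complex.I)) -
      (∫ u in (-x)..x, F (-c) ((u : ℝ) + β * Complex.I)) +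
      Complex.I * (∫ y in α..β, F (-c) (x + (y : ℝ) * Complex.I)) -
      Complex.I * (∫ y in α..β, F (-c) ((-x : ℝ) + (y : ℝ) * Complex.I)) = 0 := by
    intro x
    have := Complex.integral_boundary_rect_eq_zero_of_differentiableOn (F (-c)) (⟨-x, α⟩) (⟨x, β⟩)
      (F_diff _).differentiableOn
    simpa using this
  have t1 := intervalIntegral_tendsto_integral hA tendsto_neg_atTop_atBot tendsto_id
  have t2 := intervalIntegral_tendsto_integral hB tendsto_neg_atTop_atBot tendsto_id
  have v1 := vert_tendsto (F (-c)) α β hαβ atTop _ (tendsto_top c hδ)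
    (Eventually.of_forall fun x y hy => (norm_F_le (h y hy)).trans (by simp))
  have v2 := (vert_tendsto (F (-c)) α β hαβ atBot _ (tendsto_bot hc)
    (Eventually.of_forall fun x y hy => (norm_F_le (h y hy)).trans (by
      rw [neg_neg]
      refine mul_le_of_le_one_right (Real.exp_pos _).le ?_
      rw [Real.exp_le_one_iff]
      have := mul_pos hδ (Real.exp_pos x)
      linarith))).comp tendsto_neg_atTop_atBot
  have t3 := ((t1.sub t2).add (v1.const_mul Complex.I)).sub (v2.const_mul Complex.I)
  have t4 := tendsto_nhds_unique t3 ((tendsto_const_nhds (x := (0:ℂ))).congr (fun x => (key x).symm))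
  linear_combination t4

lemma ray_pi {c φ : ℝ} (hc : 0 < c) (hs : Complex.exp (φ * Complex.I) = -1) :
    ∫ x : ℝ, F (-c) (x + φ * Complex.I) = Complex.Gamma c * Complex.exp (c * φ * Complex.I) := by
  have h1 := Complex.Gamma_eq_integral (s := (c : ℂ)) (by simpa using hc)
  rw [Complex.GammaIntegral] at h1
  have h2 := integral_image_eq_integral_abs_deriv_smul (s := univ) (f := Real.exp)
    (f' := Real.exp) MeasurableSet.univ (fun x _ => (Real.hasDerivAt_exp x).hasDerivWithinAt)
    (Real.exp_injective.injOn) (fun x : ℝ => ((Real.exp (-x) : ℝ) : ℂ) * (x : ℂ) ^ ((c : ℂ) - 1))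
  rw [image_univ, Real.range_exp, Measure.restrict_univ] at h2
  have h3 : ∀ x : ℝ, F (-c) (x + φ * Complex.I) =
      (|Real.exp x| • (((Real.exp (-Real.exp x) : ℝ) : ℂ) *
        ((Real.exp x : ℝ) : ℂ) ^ ((c : ℂ) - 1))) * Complex.exp (c * φ * Complex.I) := by
    intro x
    rw [F, abs_of_pos (Real.exp_pos x), Complex.real_smul,
      Complex.cpow_def_of_ne_zero (by exact_mod_cast (Real.exp_pos x).ne'),
      ← Complex.ofReal_log (Real.exp_pos x).le, Real.log_exp, Complex.exp_add, hs]
    push_cast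
    simp only [← Complex.exp_add]
    congr 1
    ring
  simp_rw [h3]
  rw [integral_mul_const, ← h2, ← h1]

lemma rays_gamma {c θ : ℝ} (hc : 0 < c) (hc1 : c < 1) (h1 : Real.pi / 2 < θ) (h2 : θ < Real.pi) :
    (∫ x : ℝ, F (-c) (x + θ * Complex.I)) - (∫ x : ℝ, F (-c) (x + (-θ : ℝ) * Complex.I))
      = 2 * Real.pi * Complex.I / Complex.Gamma (1 - c) := by
  have hcos : Real.cos θ < 0 := Real.cos_neg_of_pi_div_two_lt_of_lt h1 (by linarith [Real.pi_pos])
  have hle : ∀ y ∈ Icc θ Real.pi, Real.cos y ≤ -(-Real.cos θ) := by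
    intro y hy
    rw [neg_neg]
    exact Real.cos_le_cos_of_nonneg_of_le_pi (by linarith [Real.pi_pos]) hy.2 hy.1
  rw [ray_eq hc (neg_pos.2 hcos) h2.le hle,
    ← ray_eq (α := -Real.pi) (β := -θ) hc (neg_pos.2 hcos) (by linarith) (fun y hy => by
      rw [← Real.cos_neg]; exact hle (-y) ⟨by linarith [hy.2], by linarith [hy.1]⟩),
    ray_pi hc (Complex.exp_pi_mul_I), ray_pi hc (by
      push_cast; rw [neg_mul, Complex.exp_neg, Complex.exp_pi_mul_I]; norm_num), ← mul_sub]
  have hG := Complex.Gamma_mul_Gamma_one_sub (c : ℂ)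
  have hsin : Complex.sin (Real.pi * c) ≠ 0 := by
    rw [← Complex.ofReal_mul, ← Complex.ofReal_sin]
    exact_mod_cast (Real.sin_pos_of_pos_of_lt_pi (by positivity)
      (by nlinarith [Real.pi_pos])).ne'
  have hg1 : Complex.Gamma (1 - c) ≠ 0 := by
    apply Complex.Gamma_ne_zero_of_re_pos
    simpa using hc1
  have hE : Complex.exp (c * Real.pi * Complex.I) - Complex.exp (c * (-Real.pi : ℝ) * Complex.I) =
      2 * Complex.I * Complex.sin (Real.pi * c) := by
    rw [Complex.sin]
    have a1 : (c * Real.pi * Complex.I : ℂ) = Real.pi * c * Complex.I := by ring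
    have a2 : (c * (-Real.pi : ℝ) * Complex.I : ℂ) = -(Real.pi * c) * Complex.I := by
      push_cast; ring
    rw [a1, a2]
    linear_combination (-Complex.exp (-(Real.pi * c) * Complex.I) +
      Complex.exp (Real.pi * c * Complex.I)) * Complex.I_sq
  rw [hE, eq_div_iff hg1]
  rw [eq_div_iff hsin] at hG
  linear_combination (2 * Complex.I) * hG

noncomputable def Hc (θ X : ℝ) (f : ℂ → ℂ) : ℂ :=
  (∫ x in Ioi X, f ((x : ℝ) + θ * Complex.I)) - (∫ x in Ioi X, f ((x : ℝ) + (-θ : ℝ) * Complex.I)) +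
    Complex.I * ∫ y in (-θ)..θ, f (X + (y : ℝ) * Complex.I)

lemma contour {θ X : ℝ} (f : ℂ → ℂ) (hθ : 0 < θ)
    (hd : ∀ w : ℂ, |w.im| ≤ θ → DifferentiableAt ℂ f w)
    (hp : Integrable (fun x : ℝ => f (x + θ * Complex.I)))
    (hm : Integrable (fun x : ℝ => f (x + (-θ : ℝ) * Complex.I)))
    (hv : Tendsto (fun x : ℝ => ∫ y in (-θ)..θ, f (x + (y : ℝ) * Complex.I)) atBot (𝓝 0)) :
    Hc θ X f = (∫ x : ℝ, f (x + θ * Complex.I)) - ∫ x : ℝ, f (x + (-θ : ℝ) * Complex.I) := by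
  have key : ∀ x : ℝ, (∫ u in x..X, f ((u : ℝ) + (-θ : ℝ) * Complex.I)) -
      (∫ u in x..X, f ((u : ℝ) + θ * Complex.I)) +
      Complex.I * (∫ y in (-θ)..θ, f (X + (y : ℝ) * Complex.I)) -
      Complex.I * (∫ y in (-θ)..θ, f (x + (y : ℝ) * Complex.I)) = 0 := by
    intro x
    have := Complex.integral_boundary_rect_eq_zero_of_differentiableOn f (⟨x, -θ⟩) (⟨X, θ⟩)
      (fun w hw => by
        refine (hd w ?_).differentiableWithinAt
        have := hw.2
        simp only [mem_preimage] at this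
        rw [uIcc_of_le (by linarith)] at this
        exact abs_le.2 this)
    simpa using this
  have t1 := intervalIntegral_tendsto_integral_Iic X hp.integrableOn tendsto_id
  have t2 := intervalIntegral_tendsto_integral_Iic X hm.integrableOn tendsto_id
  have t3 := ((t2.sub t1).add_const
    (Complex.I * (∫ y in (-θ)..θ, f (X + (y : ℝ) * Complex.I)))).sub (hv.const_mul Complex.I)
  have t4 := tendsto_nhds_unique t3 ((tendsto_const_nhds (x := (0:ℂ))).congr (fun x => (key x).symm))
  have s1 := intervalIntegral.integral_Iic_add_Ioi (b := X) hp.integrableOn hp.integrableOn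
  have s2 := intervalIntegral.integral_Iic_add_Ioi (b := X) hm.integrableOn hm.integrableOn
  rw [Hc, ← s1, ← s2]
  linear_combination t4

end CapEst
namespace CapEst

lemma hankel_neg {c θ X : ℝ} (hc : 0 < c) (hc1 : c < 1) (h1 : Real.pi / 2 < θ)
    (h2 : θ < Real.pi) : Hc θ X (F (-c)) = 2 * Real.pi * Complex.I / Complex.Gamma (1 - c) := by
  have hcos : Real.cos θ < 0 := Real.cos_neg_of_pi_div_two_lt_of_lt h1 (by linarith [Real.pi_pos])
  have hpi := Real.pi_pos
  rw [contour (F (-c)) (by linarith) (fun w _ => F_diff _ w) (F_int hc hcos)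
    (F_int hc (by rwa [Real.cos_neg])), rays_gamma hc hc1 h1 h2]
  refine vert_tendsto _ _ _ (by linarith) _ (fun x => Real.exp (c * x) * Real.exp 1) ?_ ?_
  · simpa using (tendsto_bot hc).mul_const (Real.exp 1)
  · filter_upwards [eventually_le_atBot 0] with x hx y _
    rw [norm_F, neg_neg]
    gcongr
    have := Real.exp_le_one_iff.2 hx
    nlinarith [Real.cos_le_one y, Real.exp_pos x]

lemma F_intOn {φ X : ℝ} (a : ℝ) (hX : 0 ≤ X) (hφ : Real.cos φ < 0) :
    IntegrableOn (fun x : ℝ => F a (x + φ * Complex.I)) (Ioi X) := by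
  refine ((int_base (c := |a| + 1) (by positivity) (neg_pos.2 hφ)).integrableOn (s := Ioi X)).mono' ?_ ?_
  · exact ((F_cont _).comp (by fun_prop)).aestronglyMeasurable
  · filter_upwards [ae_restrict_mem measurableSet_Ioi] with x hx
    refine (norm_F_le (δ := -Real.cos φ) (by simp)).trans ?_
    have hx' : 0 < x := lt_of_le_of_lt hX hx
    gcongr
    linarith [neg_le_abs a]

lemma hankel_zero {θ X : ℝ} (hX : 0 ≤ X) (h1 : Real.pi / 2 < θ)
    (h2 : θ < Real.pi) : Hc θ X (F 0) = 2 * Real.pi * Complex.I := by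
  have hcos : Real.cos θ < 0 := Real.cos_neg_of_pi_div_two_lt_of_lt h1 (by linarith [Real.pi_pos])
  have hray : ∀ φ : ℝ, Real.cos φ < 0 →
      ContinuousAt (fun a : ℝ => ∫ x in Ioi X, F a ((x : ℝ) + φ * Complex.I)) 0 := by
    intro φ hφ
    refine continuousAt_of_dominated (bound := fun x => Real.exp (1 * x) *
      Real.exp (-(-Real.cos φ * Real.exp x))) ?_ ?_ ?_ ?_
    · exact Eventually.of_forall fun a =>
        ((F_cont _).comp (by fun_prop)).aestronglyMeasurable
    · filter_upwards [Ioo_mem_nhds (show (-1:ℝ) < 0 by norm_num) (show (0:ℝ) < 1 by norm_num)]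
        with a ha
      filter_upwards [ae_restrict_mem measurableSet_Ioi] with x hx
      refine (norm_F_le (δ := -Real.cos φ) (by simp)).trans ?_
      have hx' : 0 < x := lt_of_le_of_lt hX hx
      gcongr
      linarith [ha.1]
    · exact (int_base one_pos (neg_pos.2 hφ)).integrableOn
    · refine Eventually.of_forall fun x => ?_
      unfold F
      fun_prop
  have hvert : Continuous (fun a : ℝ => ∫ y in (-θ)..θ, F a (X + (y : ℝ) * Complex.I)) := by
    apply intervalIntegral.continuous_parametric_intervalIntegral_of_continuous'
    unfold F Function.uncurry
    fun_prop
  have hc : ContinuousAt (fun a : ℝ => Hc θ X (F a)) 0 := by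
    unfold Hc
    exact ((hray θ hcos).sub (hray (-θ) (by rwa [Real.cos_neg]))).add
      (continuousAt_const.mul hvert.continuousAt)
  have hG : ContinuousAt (fun a : ℝ => 2 * Real.pi * Complex.I / Complex.Gamma (1 + a)) 0 := by
    refine continuousAt_const.div ?_ (by simp)
    have : ContinuousAt Complex.Gamma (1 + (0:ℝ)) := by
      refine (Complex.differentiableAt_Gamma _ fun m h => ?_).continuousAt
      have := congrArg Complex.re h
      simp at this
      have hm : (0:ℝ) ≤ m := Nat.cast_nonneg m
      linarith
    exact ContinuousAt.comp (f := fun a : ℝ => (1 + a : ℂ)) this (by fun_prop)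
  have e1 := hc.tendsto.mono_left (nhdsWithin_le_nhds (s := Iio (0:ℝ)))
  have e2 := hG.tendsto.mono_left (nhdsWithin_le_nhds (s := Iio (0:ℝ)))
  have e3 := tendsto_nhds_unique (e1.congr' (f₂ := fun a : ℝ => 2 * Real.pi * Complex.I / Complex.Gamma (1 + a)) (by
    filter_upwards [Ioo_mem_nhdsLT (show (-1:ℝ) < 0 by norm_num)] with a ha
    have := hankel_neg (c := -a) (X := X) (by linarith [ha.2]) (by linarith [ha.1]) h1 h2
    rw [neg_neg] at this
    rw [this]
    simp)) e2
  rw [e3]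
  simp

lemma F_deriv (a : ℝ) (w : ℂ) : HasDerivAt (F a) (F (a - 1) w - a * F a w) w := by
  have h1 := ((Complex.hasDerivAt_exp w).cexp).mul (((hasDerivAt_id w).const_mul (-a : ℂ)).cexp)
  refine (h1.congr_deriv ?_)
  unfold F
  have : Complex.exp (-((a - 1 : ℝ) : ℂ) * w) = Complex.exp w * Complex.exp (-a * w) := by
    rw [← Complex.exp_add]; congr 1; push_cast; ring
  rw [this]
  simp only [id]
  ring

lemma hankel_rec {θ X : ℝ} (a : ℝ) (hX : 0 ≤ X) (h1 : Real.pi / 2 < θ)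
    (h2 : θ < Real.pi) : Hc θ X (F (a - 1)) = a * Hc θ X (F a) := by
  have hcos : Real.cos θ < 0 := Real.cos_neg_of_pi_div_two_lt_of_lt h1 (by linarith [Real.pi_pos])
  have hray : ∀ φ : ℝ, Real.cos φ < 0 →
      (∫ x in Ioi X, F (a - 1) ((x : ℝ) + φ * Complex.I)) -
      a * (∫ x in Ioi X, F a ((x : ℝ) + φ * Complex.I)) = - F a (X + φ * Complex.I) := by
    intro φ hφ
    rw [← integral_const_mul, ← integral_sub (F_intOn _ hX hφ) ((F_intOn _ hX hφ).const_mul _)]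
    rw [integral_Ioi_of_hasDerivAt_of_tendsto' (f := fun x : ℝ => F a (x + φ * Complex.I)) (m := 0)]
    · simp
    · intro x _
      have h := (F_deriv a (x + φ * Complex.I)).scomp x
        ((Complex.ofRealCLM.hasDerivAt (x := x)).add_const (φ * Complex.I))
      simpa [Function.comp_def] using h
    · exact (F_intOn _ hX hφ).sub ((F_intOn _ hX hφ).const_mul _)
    · refine squeeze_zero_norm (fun x => norm_F_le (δ := -Real.cos φ) (by simp)) ?_
      exact tendsto_top (-a) (neg_pos.2 hφ)
  have hvert : Complex.I * (∫ y in (-θ)..θ, F (a - 1) (X + (y : ℝ) * Complex.I)) -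
      a * (Complex.I * ∫ y in (-θ)..θ, F a (X + (y : ℝ) * Complex.I)) =
      F a (X + θ * Complex.I) - F a (X + (-θ : ℝ) * Complex.I) := by
    have hc : ∀ b : ℝ, Continuous (fun y : ℝ => F b (X + (y : ℝ) * Complex.I)) := fun b =>
      (F_cont _).comp (by fun_prop)
    have := intervalIntegral.integral_eq_sub_of_hasDerivAt (a := -θ) (b := θ)
      (f := fun y : ℝ => F a (X + y * Complex.I))
      (f' := fun y : ℝ => Complex.I * (F (a - 1) (X + y * Complex.I) - a * F a (X + y * Complex.I)))
      (fun y _ => by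
        have h := (F_deriv a (X + y * Complex.I)).scomp y
          (((Complex.ofRealCLM.hasDerivAt (x := y)).mul_const Complex.I).const_add (X : ℂ))
        simpa [Function.comp_def] using h)
      (by
        apply Continuous.intervalIntegrable
        exact continuous_const.mul ((hc _).sub (continuous_const.mul (hc _))))
    rw [← this, intervalIntegral.integral_const_mul, intervalIntegral.integral_sub
      ((hc _).intervalIntegrable _ _) (((hc _).intervalIntegrable _ _).const_mul _),
      intervalIntegral.integral_const_mul]
    ring
  have r1 := hray θ hcos
  have r2 := hray (-θ) (by rwa [Real.cos_neg])
  unfold Hc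
  linear_combination r1 - r2 + hvert

lemma hankel {θ X : ℝ} (hX : 0 ≤ X) (h1 : Real.pi / 2 < θ) (h2 : θ < Real.pi) (n : ℕ) :
    ∀ a : ℝ, -1 < a → a ≤ n → Hc θ X (F a) = 2 * Real.pi * Complex.I / Complex.Gamma (a + 1) := by
  induction n with
  | zero =>
    intro a ha ha'
    rcases (show a ≤ 0 by simpa using ha').lt_or_eq with h | h
    · have := hankel_neg (c := -a) (X := X) (by linarith) (by linarith) h1 h2
      rw [neg_neg] at this
      rw [this]
      congr 2
      push_cast; ring
    · subst h
      rw [hankel_zero hX h1 h2]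
      simp
  | succ n ih =>
    intro a ha ha'
    by_cases h : a ≤ n
    · exact ih a ha h
    · push Not at h
      have ha0 : 0 < a := lt_of_le_of_lt (Nat.cast_nonneg n) h
      have := ih (a - 1) (by linarith) (by push_cast at ha'; linarith)
      rw [hankel_rec a hX h1 h2] at this
      have ha1 : (a : ℂ) ≠ 0 := by exact_mod_cast ha0.ne'
      rw [Complex.Gamma_add_one _ ha1]
      have e : (((a - 1 : ℝ) : ℂ) + 1) = a := by push_cast; ring
      rw [e] at this
      rw [mul_comm (a : ℂ) (Complex.Gamma a), ← div_div, ← this]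
      field_simp

noncomputable def G (ρ : ℝ) (z w : ℂ) : ℂ :=
  Complex.exp (Complex.exp w) * (Complex.exp (ρ * w) / (Complex.exp (ρ * w) - z))

lemma sum_piece {ρ X : ℝ} {z : ℂ} (hρ : 0 < ρ) (hz : ‖z‖ < Real.exp (ρ * X))
    (μ : Measure ℝ) (w : ℝ → ℂ) (hw : Continuous w) (hX : ∀ᵐ x ∂μ, X ≤ (w x).re)
    (B : ℝ → ℝ) (hB : Integrable B μ)
    (hwB : ∀ᵐ x ∂μ, ‖Complex.exp (Complex.exp (w x))‖ ≤ B x) :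
    HasSum (fun k : ℕ => z ^ k * ∫ x, F (ρ * k) (w x) ∂μ) (∫ x, G ρ z (w x) ∂μ) := by
  set q := ‖z‖ * Real.exp (-(ρ * X)) with hq
  have hq0 : 0 ≤ q := by positivity
  have hq1 : q < 1 := by
    rw [hq, Real.exp_neg, ← div_eq_mul_inv, div_lt_one (Real.exp_pos _)]; exact hz
  have hF : ∀ (k : ℕ) (u : ℂ), z ^ k * F (ρ * k) u =
      Complex.exp (Complex.exp u) * (z * Complex.exp (-(ρ * u))) ^ k := by
    intro k u
    rw [F, mul_pow, ← Complex.exp_nat_mul]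
    have : (-((ρ * k : ℝ) : ℂ) * u) = k * -(ρ * u) := by push_cast; ring
    rw [this]; ring
  have hqn : ∀ u : ℂ, X ≤ u.re → ‖z * Complex.exp (-(ρ * u))‖ ≤ q := by
    intro u hu
    rw [norm_mul, Complex.norm_exp, hq]
    gcongr
    simp
    gcongr
  simp_rw [← integral_const_mul]
  refine hasSum_integral_of_dominated_convergence (fun k x => B x * q ^ k) ?_ ?_ ?_ ?_ ?_
  · intro k
    exact (continuous_const.mul ((F_cont _).comp hw)).aestronglyMeasurable
  · intro k
    filter_upwards [hX, hwB] with x h1 h2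
    rw [hF, norm_mul, norm_pow]
    have h0 : 0 ≤ B x := (norm_nonneg _).trans h2
    have := hqn _ h1
    gcongr
  · exact Eventually.of_forall fun x => (summable_geometric_of_lt_one hq0 hq1).mul_left _
  · simp_rw [tsum_mul_left]
    exact hB.mul_const _
  · filter_upwards [hX] with x h1
    simp_rw [hF]
    have h3 := (hasSum_geometric_of_norm_lt_one ((hqn _ h1).trans_lt hq1)).mul_left
      (Complex.exp (Complex.exp (w x)))
    have e : G ρ z (w x) = Complex.exp (Complex.exp (w x)) *
        (1 - z * Complex.exp (-(ρ * w x)))⁻¹ := by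
      rw [G]
      congr 1
      rw [Complex.exp_neg]
      have := Complex.exp_ne_zero (ρ * w x)
      rw [← div_eq_mul_inv z, one_sub_div this, inv_div]
    rw [e]
    exact h3

lemma sum_H {ρ X θ : ℝ} {z : ℂ} (hρ : 0 < ρ) (hX : 0 ≤ X) (hz : ‖z‖ < Real.exp (ρ * X))
    (h1 : Real.pi / 2 < θ) (h2 : θ < Real.pi) :
    HasSum (fun k : ℕ => z ^ k * Hc θ X (F (ρ * k))) (Hc θ X (G ρ z)) := by
  have hcos : Real.cos θ < 0 := Real.cos_neg_of_pi_div_two_lt_of_lt h1 (by linarith [Real.pi_pos])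
  have hpi := Real.pi_pos
  have hray : ∀ φ : ℝ, Real.cos φ < 0 → HasSum
      (fun k : ℕ => z ^ k * ∫ x in Ioi X, F (ρ * k) ((x : ℝ) + φ * Complex.I))
      (∫ x in Ioi X, G ρ z ((x : ℝ) + φ * Complex.I)) := by
    intro φ hφ
    refine sum_piece hρ hz _ (fun x : ℝ => (x : ℂ) + φ * Complex.I) (by fun_prop) ?_ _
      ((F_intOn 0 hX hφ).norm) ?_
    · filter_upwards [ae_restrict_mem measurableSet_Ioi] with x hx
      simpa using le_of_lt hx
    · refine Eventually.of_forall fun x => ?_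
      simp [F]
  have hv : HasSum (fun k : ℕ => z ^ k * ∫ y in (-θ)..θ, F (ρ * k) (X + (y : ℝ) * Complex.I))
      (∫ y in (-θ)..θ, G ρ z (X + (y : ℝ) * Complex.I)) := by
    simp_rw [intervalIntegral.integral_of_le (show -θ ≤ θ by linarith)]
    refine sum_piece hρ hz _ (fun y : ℝ => (X : ℂ) + y * Complex.I) (by fun_prop) ?_
      (fun _ => Real.exp (Real.exp X)) ?_ ?_
    · exact Eventually.of_forall fun x => by simp
    · exact integrable_const _
    · refine Eventually.of_forall fun y => ?_
      rw [Complex.norm_exp, Complex.exp_re]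
      gcongr
      simpa using mul_le_of_le_one_right (Real.exp_pos X).le (Real.cos_le_one y)
  have := ((hray θ hcos).sub (hray (-θ) (by rwa [Real.cos_neg]))).add (hv.mul_left Complex.I)
  unfold Hc
  refine this.congr_fun fun k => ?_
  ring

end CapEst
namespace CapEst

lemma lower {θ : ℝ} {l : ℂ} (hθ : 0 < θ) (hθπ : θ < Real.pi) (harg : θ < |l.arg|) :
    ∃ c : ℝ, 0 < c ∧ ∀ r ψ : ℝ, 0 < r → |ψ| ≤ θ →
      c * (1 + r) ≤ ‖(r : ℂ) * Complex.exp (ψ * Complex.I) - l‖ := by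
  have hl : l ≠ 0 := by
    rintro rfl
    simp at harg
    linarith
  have hK : IsCompact (Icc (0:ℝ) 1 ×ˢ Icc (-θ) θ) := isCompact_Icc.prod isCompact_Icc
  have hcont : Continuous (fun p : ℝ × ℝ =>
      ‖(p.1 : ℂ) * Complex.exp (p.2 * Complex.I) - (1 - p.1) * l‖) := by fun_prop
  obtain ⟨p, hp, hmin⟩ := hK.exists_isMinOn
    ⟨((0:ℝ), (0:ℝ)), ⟨by simp, by constructor <;> linarith⟩⟩ hcont.continuousOn
  refine ⟨‖(p.1 : ℂ) * Complex.exp (p.2 * Complex.I) - (1 - p.1) * l‖, ?_,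
    fun r ψ hr hψ => ?_⟩
  · rw [norm_pos_iff]
    intro h0
    have hp1 := hp.1
    have hp2 := hp.2
    by_cases h1 : p.1 = 0
    · rw [h1] at h0; simp at h0; exact hl h0
    have hpos : 0 < p.1 := lt_of_le_of_ne hp1.1 (Ne.symm h1)
    by_cases h2 : p.1 = 1
    · rw [h2] at h0; simp [Complex.exp_ne_zero] at h0
    have hlt : p.1 < 1 := lt_of_le_of_ne hp1.2 h2
    have h3 : (1 - (p.1 : ℂ)) ≠ 0 := by
      rw [sub_ne_zero]; exact_mod_cast (Ne.symm h2)
    have : l = ((p.1 / (1 - p.1) : ℝ) : ℂ) *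
        (Complex.cos p.2 + Complex.sin p.2 * Complex.I) := by
      rw [← Complex.exp_mul_I]
      push_cast
      field_simp
      linear_combination -h0
    have ha : l.arg = p.2 := by
      rw [this]
      exact Complex.arg_mul_cos_add_sin_mul_I (div_pos hpos (by linarith))
        ⟨by linarith [hp2.1], by linarith [hp2.2]⟩
    rw [ha] at harg
    exact absurd (abs_le.2 hp2) (not_le.2 harg)
  · have hm := hmin (show ((r / (1 + r), ψ) : ℝ × ℝ) ∈ Icc (0:ℝ) 1 ×ˢ Icc (-θ) θ from
      ⟨⟨by positivity, (div_le_one (by positivity)).2 (by linarith)⟩, abs_le.1 hψ⟩)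
    simp only [mem_setOf_eq] at hm
    have hr1 : (1 + (r : ℂ)) ≠ 0 := by
      exact_mod_cast (show (1 + r : ℝ) ≠ 0 by positivity)
    have e : (r : ℂ) * Complex.exp (ψ * Complex.I) - l =
        (((r / (1 + r) : ℝ) : ℂ) * Complex.exp (ψ * Complex.I) -
          (1 - ((r / (1 + r) : ℝ) : ℂ)) * l) * ((1 + r : ℝ) : ℂ) := by
      push_cast
      field_simp
      ring
    rw [e, norm_mul, Complex.norm_real, Real.norm_of_nonneg (by positivity : (0:ℝ) ≤ 1 + r)]
    gcongr

/-- lower bound property -/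
def LB (θ c : ℝ) (l : ℂ) : Prop := 0 < c ∧ ∀ r ψ : ℝ, 0 < r → |ψ| ≤ θ →
      c * (1 + r) ≤ ‖(r : ℂ) * Complex.exp (ψ * Complex.I) - l‖

lemma LB.exp {θ c ρ : ℝ} {l : ℂ} (h : LB θ c l) (hρ : 0 < ρ) (hρ1 : ρ ≤ 1) {w : ℂ}
    (hw : |w.im| ≤ θ) :
    c * (1 + Real.exp (ρ * w.re)) ≤ ‖Complex.exp (ρ * w) - l‖ := by
  have := h.2 (Real.exp (ρ * w.re)) (ρ * w.im) (Real.exp_pos _) (by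
    rw [abs_mul, abs_of_pos hρ]
    nlinarith [abs_nonneg w.im])
  convert this using 3
  rw [Complex.ofReal_exp, ← Complex.exp_add]
  congr 1
  push_cast
  conv_lhs => rw [← Complex.re_add_im w]
  ring

lemma LB.ne {θ c ρ : ℝ} {l : ℂ} (h : LB θ c l) (hρ : 0 < ρ) (hρ1 : ρ ≤ 1) {w : ℂ}
    (hw : |w.im| ≤ θ) : Complex.exp (ρ * w) - l ≠ 0 := by
  rw [← norm_pos_iff]
  refine lt_of_lt_of_le ?_ (h.exp hρ hρ1 hw)
  have := h.1
  positivity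

lemma LB.G_diff {θ c ρ : ℝ} {l : ℂ} (h : LB θ c l) (hρ : 0 < ρ) (hρ1 : ρ ≤ 1) {w : ℂ}
    (hw : |w.im| ≤ θ) : DifferentiableAt ℂ (G ρ l) w := by
  have := h.ne hρ hρ1 hw
  unfold G
  fun_prop (disch := assumption)

lemma LB.G_norm {θ c ρ : ℝ} {l : ℂ} (h : LB θ c l) (hρ : 0 < ρ) (hρ1 : ρ ≤ 1) {x φ : ℝ}
    (hw : |φ| ≤ θ) : ‖G ρ l (x + φ * Complex.I)‖ ≤ c⁻¹ * ‖F (-ρ) (x + φ * Complex.I)‖ := by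
  have h1 := h.exp hρ hρ1 (w := x + φ * Complex.I) (by simpa using hw)
  have hc := h.1
  rw [G, F, norm_mul, norm_mul, norm_div]
  have h2 : c ≤ ‖Complex.exp (ρ * (x + φ * Complex.I)) - l‖ := by
    refine le_trans ?_ h1
    have := Real.exp_pos (ρ * ((x : ℂ) + φ * Complex.I).re)
    nlinarith
  simp only [Complex.ofReal_neg, neg_neg]
  rw [mul_left_comm, inv_mul_eq_div]
  gcongr

lemma LB.G_int {θ c ρ : ℝ} {l : ℂ} (h : LB θ c l) (hρ : 0 < ρ) (hρ1 : ρ ≤ 1) {φ : ℝ}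
    (hw : |φ| ≤ θ) (hφ : Real.cos φ < 0) :
    Integrable (fun x : ℝ => G ρ l (x + φ * Complex.I)) := by
  refine ((F_int hρ hφ).norm.const_mul c⁻¹).mono' ?_
    (Eventually.of_forall fun x => h.G_norm hρ hρ1 hw)
  refine Continuous.aestronglyMeasurable (continuous_iff_continuousAt.2 fun x => ?_)
  exact ContinuousAt.comp (f := fun x : ℝ => (x + φ * Complex.I : ℂ))
    (h.G_diff hρ hρ1 (by simpa using hw)).continuousAt (by fun_prop)

lemma rep {θ c ρ : ℝ} {z : ℂ} (h : LB θ c z) (hρ : 0 < ρ) (hρ1 : ρ < 1)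
    (h1 : Real.pi / 2 < θ) (h2 : θ < Real.pi) :
    2 * Real.pi * Complex.I * mittagLeffler ρ z =
      (∫ x : ℝ, G ρ z (x + θ * Complex.I)) - ∫ x : ℝ, G ρ z (x + (-θ : ℝ) * Complex.I) := by
  have hcos : Real.cos θ < 0 := Real.cos_neg_of_pi_div_two_lt_of_lt h1 (by linarith [Real.pi_pos])
  have hpi := Real.pi_pos
  have habs : |θ| ≤ θ := by rw [abs_of_pos]; linarith
  have hc := h.1
  obtain ⟨X, hX, hz⟩ : ∃ X : ℝ, 0 ≤ X ∧ ‖z‖ < Real.exp (ρ * X) := by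
    refine ⟨‖z‖ / ρ, by positivity, ?_⟩
    rw [mul_div_cancel₀ _ hρ.ne']
    linarith [Real.add_one_le_exp ‖z‖]
  rw [← contour (X := X) (G ρ z) (by linarith) (fun w hw => h.G_diff hρ hρ1.le hw)
    (h.G_int hρ hρ1.le habs hcos)
    (h.G_int hρ hρ1.le (by rwa [abs_neg]) (by rwa [Real.cos_neg]))]
  · rw [← (sum_H hρ hX hz h1 h2).tsum_eq, mittagLeffler, ← tsum_mul_left]
    refine tsum_congr fun k => ?_
    rw [hankel hX h1 h2 ⌈ρ * k⌉₊ (ρ * k) (by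
      have : 0 ≤ ρ * k := by positivity
      linarith) (Nat.le_ceil _)]
    push_cast
    ring
  · refine vert_tendsto _ _ _ (by linarith) _
      (fun x => c⁻¹ * (Real.exp (ρ * x) * Real.exp 1)) ?_ ?_
    · simpa using ((tendsto_bot hρ).mul_const (Real.exp 1)).const_mul c⁻¹
    · filter_upwards [eventually_le_atBot 0] with x hx y hy
      refine (h.G_norm hρ hρ1.le (abs_le.2 hy)).trans ?_
      rw [norm_F, neg_neg]
      gcongr
      have := Real.exp_le_one_iff.2 hx
      nlinarith [Real.cos_le_one y, Real.exp_pos x]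

noncomputable def S (t : ℝ) (l : ℂ) (ρ : ℝ) (w : ℂ) : ℂ :=
  Complex.exp (t * Complex.exp w) * (Complex.exp (ρ * w) ^ 2 / (l * (Complex.exp (ρ * w) - l)))

lemma S_shift {t ρ φ : ℝ} {l : ℂ} (ht : 0 < t) :
    ∫ x : ℝ, S 1 (l * ((t ^ ρ : ℝ) : ℂ)) ρ (x + φ * Complex.I) =
      ∫ x : ℝ, S t l ρ (x + φ * Complex.I) := by
  rw [← integral_add_right_eq_self _ (Real.log t)]
  congr 1
  ext x
  have htr : ((t ^ ρ : ℝ) : ℂ) ≠ 0 := by exact_mod_cast (Real.rpow_pos_of_pos ht ρ).ne'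
  have e1 : Complex.exp (((x + Real.log t : ℝ) : ℂ) + φ * Complex.I) =
      t * Complex.exp (x + φ * Complex.I) := by
    push_cast
    rw [add_right_comm, Complex.exp_add _ (Real.log t : ℂ), ← Complex.ofReal_exp,
      Real.exp_log ht, mul_comm]
  have e2 : Complex.exp (ρ * (((x + Real.log t : ℝ) : ℂ) + φ * Complex.I)) =
      ((t ^ ρ : ℝ) : ℂ) * Complex.exp (ρ * (x + φ * Complex.I)) := by
    have : (ρ * (((x + Real.log t : ℝ) : ℂ) + φ * Complex.I)) =
      ((Real.log t * ρ : ℝ) : ℂ) + ρ * (x + φ * Complex.I) := by push_cast; ring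
    rw [this, Complex.exp_add, ← Complex.ofReal_exp, ← Real.rpow_def_of_pos ht]
  unfold S
  rw [e1, e2, Complex.ofReal_one, one_mul]
  congr 1
  have e3 : (l * ((t ^ ρ : ℝ) : ℂ)) * (((t ^ ρ : ℝ) : ℂ) * Complex.exp (ρ * (x + φ * Complex.I)) -
    l * ((t ^ ρ : ℝ) : ℂ)) = ((t ^ ρ : ℝ) : ℂ) ^ 2 * (l * (Complex.exp (ρ * (x + φ * Complex.I)) - l)) := by
    ring
  rw [e3, mul_pow, mul_div_mul_left _ _ (pow_ne_zero 2 htr)]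

lemma G_split {θ c ρ : ℝ} {z : ℂ} (h : LB θ c z) (hz : z ≠ 0) (hρ : 0 < ρ) (hρ1 : ρ < 1)
    {φ : ℝ} (hφ : |φ| ≤ θ) (hcos : Real.cos φ < 0) :
    ∫ x : ℝ, G ρ z (x + φ * Complex.I) = -(1 / z) * (∫ x : ℝ, F (-ρ) (x + φ * Complex.I)) +
      ∫ x : ℝ, S 1 z ρ (x + φ * Complex.I) := by
  have hI := h.G_int hρ hρ1.le hφ hcos
  have hF := F_int hρ hcos
  have e : ∀ x : ℝ, S 1 z ρ (x + φ * Complex.I) = G ρ z (x + φ * Complex.I) -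
      -(1 / z) * F (-ρ) (x + φ * Complex.I) := by
    intro x
    have hne := h.ne hρ hρ1.le (w := x + φ * Complex.I) (by simpa using hφ)
    unfold S G F
    push_cast
    rw [one_mul, neg_neg]
    generalize Complex.exp (ρ * (x + φ * Complex.I)) = u at *
    field_simp
    ring
  simp_rw [e]
  rw [integral_sub hI (hF.const_mul _), integral_const_mul]
  ring

lemma LB_scale {θ : ℝ} {l : ℂ} (hθ : 0 < θ) (hθπ : θ < Real.pi) (harg : θ < |l.arg|) {s : ℝ}
    (hs : 0 < s) : ∃ c, LB θ c (l * (s : ℂ)) := by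
  have := lower (l := l * (s : ℂ)) hθ hθπ (by rwa [Complex.arg_mul_real hs])
  exact this

lemma rep_main {θ ρ t : ℝ} {l : ℂ} (h1 : Real.pi / 2 < θ) (h2 : θ < Real.pi) (harg : θ < |l.arg|)
    (ht : 0 < t) (hρ : 0 < ρ) (hρ1 : ρ < 1) :
    mittagLeffler ρ (l * ((t ^ ρ : ℝ) : ℂ)) =
      -(1 / l) * ((t ^ (-ρ) * ((1 - ρ) / Real.Gamma (2 - ρ)) : ℝ) : ℂ) +
      (2 * Real.pi * Complex.I)⁻¹ * ((∫ x : ℝ, S t l ρ (x + θ * Complex.I)) -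
        ∫ x : ℝ, S t l ρ (x + (-θ : ℝ) * Complex.I)) := by
  have hcos : Real.cos θ < 0 := Real.cos_neg_of_pi_div_two_lt_of_lt h1 (by linarith [Real.pi_pos])
  have hpi := Real.pi_pos
  have habs : |θ| ≤ θ := by rw [abs_of_pos]; linarith
  have hl : l ≠ 0 := by
    rintro rfl
    simp at harg
    linarith
  have htr := Real.rpow_pos_of_pos ht ρ
  have htr' : ((t ^ ρ : ℝ) : ℂ) ≠ 0 := by exact_mod_cast htr.ne'
  obtain ⟨c, hc⟩ := LB_scale (by linarith) h2 harg htr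
  have hz : l * ((t ^ ρ : ℝ) : ℂ) ≠ 0 := mul_ne_zero hl htr'
  have hr := rep hc hρ hρ1 h1 h2
  rw [G_split hc hz hρ hρ1 habs hcos,
    G_split hc hz hρ hρ1 (φ := -θ) (by rwa [abs_neg]) (by rwa [Real.cos_neg]),
    S_shift ht, S_shift ht] at hr
  have hg := rays_gamma hρ hρ1 h1 h2
  have hpi' : (2 * Real.pi * Complex.I : ℂ) ≠ 0 := by
    simp [Real.pi_ne_zero]
  have hG : Complex.Gamma (1 - ρ) ≠ 0 := by
    apply Complex.Gamma_ne_zero_of_re_pos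
    simpa using hρ1
  have hG2 : ((Real.Gamma (2 - ρ) : ℝ) : ℂ) = (1 - ρ) * Complex.Gamma (1 - ρ) := by
    rw [← Complex.Gamma_ofReal, ← Complex.Gamma_add_one]
    · congr 1; push_cast; ring
    · rw [sub_ne_zero]; exact_mod_cast hρ1.ne'
  have hρ' : (1 - ρ : ℂ) ≠ 0 := by
    rw [sub_ne_zero]; exact_mod_cast hρ1.ne'
  have hm : -(1 / l) * ((t ^ (-ρ) * ((1 - ρ) / Real.Gamma (2 - ρ)) : ℝ) : ℂ) =
      -(1 / (l * ((t ^ ρ : ℝ) : ℂ))) * (Complex.Gamma (1 - ρ))⁻¹ := by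
    rw [Real.rpow_neg ht.le]
    push_cast [-Complex.ofReal_cpow]
    rw [hG2]
    field_simp
  rw [hm]
  apply mul_left_cancel₀ hpi'
  rw [hr, mul_add, mul_inv_cancel_left₀ hpi']
  rw [div_eq_mul_inv] at hg
  linear_combination -(1 / (l * ((t ^ ρ : ℝ) : ℂ))) * hg

end CapEst
namespace CapEst

lemma digamma_le {s : ℝ} (hs : 1 < s) (hs2 : s < 2) :
    deriv Real.Gamma s ≤ (1 - Real.eulerMascheroniConstant) * Real.Gamma s := by
  have hd : ∀ u : ℝ, 0 < u → DifferentiableAt ℝ Real.Gamma u := fun u hu =>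
    Real.differentiableAt_Gamma (fun m => ne_of_gt (by
      have : (0:ℝ) ≤ m := Nat.cast_nonneg m
      linarith))
  have hf : ∀ u : ℝ, 0 < u → HasDerivAt (Real.log ∘ Real.Gamma) (deriv Real.Gamma u / Real.Gamma u) u :=
    fun u hu => (hd u hu).hasDerivAt.log (Real.Gamma_pos_of_pos hu).ne'
  have h0 : 0 < s := by linarith
  have h1 := Real.convexOn_log_Gamma.le_slope_of_hasDerivAt (mem_Ioi.2 h0) (mem_Ioi.2 two_pos) hs2
    (hf s h0)
  have h2 := Real.convexOn_log_Gamma.slope_le_of_hasDerivAt (mem_Ioi.2 h0) (mem_Ioi.2 two_pos) hs2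
    (hf 2 two_pos)
  have h3 := Real.deriv_Gamma_nat 1
  norm_num at h3
  rw [h3, Real.Gamma_two] at h2
  have h4 := h1.trans h2
  rw [div_le_iff₀ (Real.Gamma_pos_of_pos h0)] at h4
  linarith

lemma Gamma_le_one {s : ℝ} (hs : 1 < s) (hs2 : s < 2) : Real.Gamma s ≤ 1 := by
  have h := Real.convexOn_Gamma.2 (mem_Ioi.2 (one_pos : (0:ℝ) < 1)) (mem_Ioi.2 (two_pos : (0:ℝ) < 2))
    (show 0 ≤ 2 - s by linarith) (show 0 ≤ s - 1 by linarith) (by ring)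
  simp only [smul_eq_mul, Real.Gamma_one, Real.Gamma_two] at h
  have e : (2 - s) * 1 + (s - 1) * 2 = s := by ring
  rw [e] at h
  linarith

lemma main_deriv {t ρ : ℝ} (ht : 0 < t) (hL : 1 - Real.eulerMascheroniConstant < Real.log t)
    (hρ : 0 < ρ) (hρ1 : ρ < 1) :
    ∃ m : ℝ, HasDerivAt (fun ρ : ℝ => t ^ (-ρ) * ((1 - ρ) / Real.Gamma (2 - ρ))) m ρ ∧
      m < -(t ^ (-ρ)) := by
  have hs : 1 < 2 - ρ := by linarith
  have hs2 : 2 - ρ < 2 := by linarith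
  have hg := Real.Gamma_pos_of_pos (show 0 < 2 - ρ by linarith)
  have hg1 := Gamma_le_one hs hs2
  have hdg := digamma_le hs hs2
  have hd : HasDerivAt Real.Gamma (deriv Real.Gamma (2 - ρ)) (2 - ρ) :=
    (Real.differentiableAt_Gamma (fun m => ne_of_gt (by
      have : (0:ℝ) ≤ m := Nat.cast_nonneg m
      linarith))).hasDerivAt
  have hd2 : HasDerivAt (fun ρ : ℝ => Real.Gamma (2 - ρ)) (-deriv Real.Gamma (2 - ρ)) ρ := by
    have := hd.comp ρ ((hasDerivAt_id ρ).const_sub 2)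
    simpa [Function.comp_def] using this
  have hd3 : HasDerivAt (fun ρ : ℝ => t ^ (-ρ)) (-(Real.log t * t ^ (-ρ))) ρ := by
    have := (hasDerivAt_neg ρ).const_rpow ht
    simpa using this
  have hd4 := hd3.mul (((hasDerivAt_id ρ).const_sub 1).div hd2 hg.ne')
  refine ⟨_, hd4, ?_⟩
  have hT := Real.rpow_pos_of_pos ht (-ρ)
  set T := t ^ (-ρ)
  set g := Real.Gamma (2 - ρ)
  set g' := deriv Real.Gamma (2 - ρ)
  set L := Real.log t
  simp only [id, Pi.div_apply]
  have e : -(L * T) * ((1 - ρ) / g) + T * ((-1 * g - (1 - ρ) * -g') / g ^ 2) =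
      T * ((-(1 - ρ) * (L * g - g') - g) / g ^ 2) := by
    field_simp
    ring
  rw [e]
  have h5 : (-(1 - ρ) * (L * g - g') - g) / g ^ 2 < -1 := by
    rw [div_lt_iff₀ (by positivity)]
    have h6 : 0 < L * g - g' := by nlinarith
    have h7 := mul_pos (show 0 < 1 - ρ by linarith) h6
    nlinarith
  nlinarith

lemma exp_interp {a b ρ x : ℝ} (h1 : a ≤ ρ) (h2 : ρ ≤ b) :
    Real.exp (ρ * x) ≤ Real.exp (a * x) + Real.exp (b * x) := by
  rcases le_total 0 x with h | h
  · have : Real.exp (ρ * x) ≤ Real.exp (b * x) := by gcongr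
    linarith [Real.exp_pos (a * x)]
  · have : Real.exp (ρ * x) ≤ Real.exp (a * x) := Real.exp_le_exp.2 (by nlinarith)
    linarith [Real.exp_pos (b * x)]

lemma int_abs {c δ : ℝ} (hc : 0 < c) (hδ : 0 < δ) :
    Integrable (fun x : ℝ => (|x| + Real.pi) *
      (Real.exp (c * x) * Real.exp (-(δ * Real.exp x)))) := by
  have hpi := Real.pi_pos
  have i1 := (int_base (c := 3 * c / 2) (by positivity) hδ).const_mul (2 / c)
  have i2 := (int_base (c := c / 2) (by positivity) hδ).const_mul (2 / c)
  have i3 := (int_base hc hδ).const_mul Real.pi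
  refine ((i1.add i2).add i3).mono' (by fun_prop) (Eventually.of_forall fun x => ?_)
  rw [Real.norm_of_nonneg (by positivity)]
  simp only [Pi.add_apply]
  have h1 : |x| ≤ 2 / c * (Real.exp (c / 2 * x) + Real.exp (-(c / 2 * x))) := by
    rw [div_mul_eq_mul_div, le_div_iff₀ hc]
    have a1 := Real.add_one_le_exp (c / 2 * x)
    have a2 := Real.add_one_le_exp (-(c / 2 * x))
    have b1 := Real.exp_pos (c / 2 * x)
    have b2 := Real.exp_pos (-(c / 2 * x))
    rcases abs_cases x with ⟨h, _⟩ | ⟨h, _⟩ <;> rw [h] <;> nlinarith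
  have e1 : Real.exp (3 * c / 2 * x) = Real.exp (c / 2 * x) * Real.exp (c * x) := by
    rw [← Real.exp_add]; congr 1; ring
  have e2 : Real.exp (c / 2 * x) = Real.exp (-(c / 2 * x)) * Real.exp (c * x) := by
    rw [← Real.exp_add]; congr 1; ring
  have e3 : 2 / c * (Real.exp (3 * c / 2 * x) * Real.exp (-(δ * Real.exp x))) +
      2 / c * (Real.exp (c / 2 * x) * Real.exp (-(δ * Real.exp x))) =
      2 / c * (Real.exp (c / 2 * x) + Real.exp (-(c / 2 * x))) *
        (Real.exp (c * x) * Real.exp (-(δ * Real.exp x))) := by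
    rw [e1]
    nth_rewrite 2 [e2]
    ring
  rw [e3, add_mul]
  gcongr

noncomputable def S' (t : ℝ) (l : ℂ) (ρ : ℝ) (w : ℂ) : ℂ :=
  Complex.exp (t * Complex.exp w) * (w * Complex.exp (ρ * w) ^ 2 * (Complex.exp (ρ * w) - 2 * l) /
    (l * (Complex.exp (ρ * w) - l) ^ 2))

lemma S_hasDeriv {t ρ : ℝ} {l w : ℂ} (hl : l ≠ 0) (hne : Complex.exp (ρ * w) - l ≠ 0) :
    HasDerivAt (fun ρ : ℝ => S t l ρ w) (S' t l ρ w) ρ := by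
  have h1 : HasDerivAt (fun ρ : ℝ => Complex.exp (ρ * w)) (Complex.exp (ρ * w) * w) ρ := by
    have := ((Complex.ofRealCLM.hasDerivAt (x := ρ)).mul_const w).cexp
    simpa using this
  have h2 := ((h1.pow 2).div ((h1.sub_const l).const_mul l) (mul_ne_zero hl hne)).const_mul
    (Complex.exp (t * Complex.exp w))
  refine h2.congr_deriv ?_
  unfold S'
  simp only [Pi.pow_apply]
  generalize Complex.exp (ρ * w) = u at *
  congr 1
  field_simp
  ring

lemma norm_exp_t (t x φ : ℝ) : ‖Complex.exp (t * Complex.exp (x + φ * Complex.I))‖ =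
    Real.exp (-(t * -Real.cos φ * Real.exp x)) := by
  rw [Complex.norm_exp, Complex.re_ofReal_mul, Complex.exp_re]
  simp
  ring

lemma norm_exp_ρ (ρ x φ : ℝ) : ‖Complex.exp (ρ * (x + φ * Complex.I))‖ = Real.exp (ρ * x) := by
  rw [Complex.norm_exp, Complex.re_ofReal_mul]
  simp

lemma S'_norm {θ c ρ t : ℝ} {l : ℂ} (h : LB θ c l) (hl : l ≠ 0) (hρ : 0 < ρ) (hρ1 : ρ ≤ 1)
    {x φ : ℝ} (hw : |φ| ≤ θ) (hθ : θ < Real.pi) :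
    ‖S' t l ρ (x + φ * Complex.I)‖ ≤ (1 + 2 * ‖l‖) / (‖l‖ * c ^ 2) * ((|x| + Real.pi) *
      (Real.exp (2 * ρ * x) * Real.exp (-(t * -Real.cos φ * Real.exp x)))) := by
  have h1 := h.exp hρ hρ1 (w := x + φ * Complex.I) (by simpa using hw)
  have hc := h.1
  have hl' : 0 < ‖l‖ := norm_pos_iff.2 hl
  have hn : ‖(x : ℂ) + φ * Complex.I‖ ≤ |x| + Real.pi := by
    refine (norm_add_le _ _).trans ?_
    simp
    linarith
  have hu := norm_exp_ρ ρ x φ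
  have hre : ((x : ℂ) + φ * Complex.I).re = x := by simp
  rw [hre] at h1
  have hr := Real.exp_pos (ρ * x)
  have h2 : Real.exp (2 * ρ * x) = Real.exp (ρ * x) ^ 2 := by
    rw [← Real.exp_nat_mul]; congr 1; push_cast; ring
  rw [S', norm_mul, norm_exp_t, norm_div, norm_mul, norm_mul, norm_mul, norm_pow, norm_pow, hu, h2]
  have h3 : ‖Complex.exp (ρ * (x + φ * Complex.I)) - 2 * l‖ ≤
      (1 + 2 * ‖l‖) * (1 + Real.exp (ρ * x)) ^ 2 := by
    refine (norm_sub_le _ _).trans ?_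
    rw [hu, norm_mul]
    simp only [Complex.norm_ofNat]
    nlinarith [mul_pos hl' hr, mul_pos hl' (mul_pos hr hr)]
  set r := Real.exp (ρ * x)
  have h4 : (c * (1 + r)) ^ 2 ≤ ‖Complex.exp (ρ * (x + φ * Complex.I)) - l‖ ^ 2 := by
    gcongr
  calc _ ≤ Real.exp (-(t * -Real.cos φ * Real.exp x)) * ((|x| + Real.pi) * r ^ 2 *
        ((1 + 2 * ‖l‖) * (1 + r) ^ 2) / (‖l‖ * (c * (1 + r)) ^ 2)) := by
        have hpi := Real.pi_pos
        gcongr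
    _ = _ := by
        field_simp

lemma S_norm {θ c ρ t : ℝ} {l : ℂ} (h : LB θ c l) (hl : l ≠ 0) (hρ : 0 < ρ) (hρ1 : ρ ≤ 1)
    {x φ : ℝ} (hw : |φ| ≤ θ) :
    ‖S t l ρ (x + φ * Complex.I)‖ ≤ 1 / (‖l‖ * c) * 
      (Real.exp (2 * ρ * x) * Real.exp (-(t * -Real.cos φ * Real.exp x))) := by
  have h1 := h.exp hρ hρ1 (w := x + φ * Complex.I) (by simpa using hw)
  have hc := h.1
  have hl' : 0 < ‖l‖ := norm_pos_iff.2 hl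
  have hu := norm_exp_ρ ρ x φ
  have hre : ((x : ℂ) + φ * Complex.I).re = x := by simp
  rw [hre] at h1
  have hr := Real.exp_pos (ρ * x)
  have h2 : Real.exp (2 * ρ * x) = Real.exp (ρ * x) ^ 2 := by
    rw [← Real.exp_nat_mul]; congr 1; push_cast; ring
  rw [S, norm_mul, norm_exp_t, norm_div, norm_mul, norm_pow, hu, h2]
  have h3 : c ≤ ‖Complex.exp (ρ * (x + φ * Complex.I)) - l‖ := by nlinarith
  calc _ ≤ Real.exp (-(t * -Real.cos φ * Real.exp x)) * (Real.exp (ρ * x) ^ 2 / (‖l‖ * c)) := by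
        gcongr
    _ = _ := by ring

lemma S_cont {θ c ρ t : ℝ} {l : ℂ} (h : LB θ c l) (hl : l ≠ 0) (hρ : 0 < ρ) (hρ1 : ρ ≤ 1)
    {φ : ℝ} (hw : |φ| ≤ θ) : Continuous (fun x : ℝ => S t l ρ (x + φ * Complex.I)) := by
  have hne : ∀ x : ℝ, l * (Complex.exp (ρ * (x + φ * Complex.I)) - l) ≠ 0 := fun x =>
    mul_ne_zero hl (h.ne hρ hρ1 (by simpa using hw))
  unfold S
  fun_prop (disch := assumption)

lemma S'_cont {θ c ρ t : ℝ} {l : ℂ} (h : LB θ c l) (hl : l ≠ 0) (hρ : 0 < ρ) (hρ1 : ρ ≤ 1)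
    {φ : ℝ} (hw : |φ| ≤ θ) : Continuous (fun x : ℝ => S' t l ρ (x + φ * Complex.I)) := by
  have hne : ∀ x : ℝ, l * (Complex.exp (ρ * (x + φ * Complex.I)) - l) ^ 2 ≠ 0 := fun x =>
    mul_ne_zero hl (pow_ne_zero 2 (h.ne hρ hρ1 (by simpa using hw)))
  unfold S'
  fun_prop (disch := assumption)

lemma ray_deriv {θ c β : ℝ} {l : ℂ} (h : LB θ c l) (hl : l ≠ 0) (hβ : 0 < β)
    {φ : ℝ} (hw : |φ| ≤ θ) (hθ : θ < Real.pi) (hφ : Real.cos φ < 0) :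
    ∃ M : ℝ, 0 < M ∧ ∀ t : ℝ, 1 < t → ∀ ρ ∈ Ico β 1, ∃ D : ℂ,
      HasDerivAt (fun ρ : ℝ => ∫ x : ℝ, S t l ρ (x + φ * Complex.I)) D ρ ∧
      ‖D‖ ≤ M * (1 + Real.log t) / (t ^ ρ) ^ 2 := by
  set δ := -Real.cos φ with hδ
  have hδ0 : 0 < δ := neg_pos.2 hφ
  set K := (1 + 2 * ‖l‖) / (‖l‖ * c ^ 2) with hK
  have hc := h.1
  have hl' : 0 < ‖l‖ := norm_pos_iff.2 hl
  have hpi := Real.pi_pos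
  have hK0 : 0 < K := by positivity
  set Q : ℝ → ℝ := fun x => (|x| + Real.pi) * (Real.exp (2 * β * x) * Real.exp (-(δ * Real.exp x))) +
    (|x| + Real.pi) * (Real.exp (2 * x) * Real.exp (-(δ * Real.exp x))) with hQ
  have hQi : Integrable Q := (int_abs (by positivity) hδ0).add (int_abs two_pos hδ0)
  have hQ0 : 0 ≤ ∫ x, Q x := integral_nonneg fun x => by
    simp only [hQ, Pi.zero_apply]; positivity
  refine ⟨K * ((∫ x, Q x) + 1), by positivity, fun t ht ρ hρ => ?_⟩
  have ht0 : 0 < t := by linarith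
  have hρ0 : 0 < ρ := lt_of_lt_of_le hβ hρ.1
  have hL : 0 < Real.log t := Real.log_pos ht
  have htδ : 0 < t * δ := by positivity
  refine ⟨∫ x : ℝ, S' t l ρ (x + φ * Complex.I), ?_, ?_⟩
  · refine (hasDerivAt_integral_of_dominated_loc_of_deriv_le (E := ℂ) (μ := volume) (s := Ioo (β / 2) 1)
      (F := fun (ρ : ℝ) (x : ℝ) => S t l ρ (x + φ * Complex.I))
      (F' := fun (ρ : ℝ) (x : ℝ) => S' t l ρ (x + φ * Complex.I))
      (bound := fun x => K * ((|x| + Real.pi) * (Real.exp (β * x) * Real.exp (-(t * δ * Real.exp x))) +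
        (|x| + Real.pi) * (Real.exp (2 * x) * Real.exp (-(t * δ * Real.exp x)))))
      (Ioo_mem_nhds (by linarith [hρ.1]) hρ.2) ?_ ?_ ?_ ?_ ?_ ?_).2
    · filter_upwards [Ioo_mem_nhds (show β / 2 < ρ by linarith [hρ.1]) hρ.2] with s hs
      exact (S_cont h hl (by linarith [hs.1]) hs.2.le hw).aestronglyMeasurable
    · refine ((int_base (c := 2 * ρ) (by positivity) htδ).const_mul (1 / (‖l‖ * c))).mono'
        (S_cont h hl hρ0 hρ.2.le hw).aestronglyMeasurable
        (Eventually.of_forall fun x => S_norm h hl hρ0 hρ.2.le hw)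
    · exact (S'_cont h hl hρ0 hρ.2.le hw).aestronglyMeasurable
    · refine Eventually.of_forall fun x s hs => ?_
      refine (S'_norm h hl (by linarith [hs.1]) hs.2.le hw hθ).trans ?_
      rw [← mul_add, ← add_mul]
      gcongr
      exact exp_interp (by linarith [hs.1]) (by linarith [hs.2])
    · exact ((int_abs hβ htδ).add (int_abs two_pos htδ)).const_mul K
    · exact Eventually.of_forall fun x s hs =>
        S_hasDeriv hl (h.ne (by linarith [hs.1]) hs.2.le (by simpa using hw))
  · rw [← integral_add_right_eq_self (fun x : ℝ => S' t l ρ (x + φ * Complex.I)) (-Real.log t)]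
    have hb : ∀ x : ℝ, ‖S' t l ρ (((x + -Real.log t : ℝ) : ℂ) + φ * Complex.I)‖ ≤
        K * (1 + Real.log t) / (t ^ ρ) ^ 2 * Q x := by
      intro x
      refine (S'_norm h hl hρ0 hρ.2.le hw hθ).trans ?_
      have e1 : Real.exp (2 * ρ * (x + -Real.log t)) = Real.exp (2 * ρ * x) / (t ^ ρ) ^ 2 := by
        rw [Real.rpow_def_of_pos ht0, ← Real.exp_nat_mul, ← Real.exp_sub]
        congr 1; push_cast; ring
      have e2 : t * -Real.cos φ * Real.exp (x + -Real.log t) = δ * Real.exp x := by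
        rw [Real.exp_add, Real.exp_neg, Real.exp_log ht0]
        field_simp
        rw [hδ]
      rw [e1, e2]
      have h1 : |x + -Real.log t| + Real.pi ≤ (1 + Real.log t) * (|x| + Real.pi) := by
        have := abs_add_le x (-Real.log t)
        rw [abs_neg, abs_of_pos hL] at this
        have h3 := Real.pi_gt_three
        nlinarith [abs_nonneg x, mul_nonneg hL.le (abs_nonneg x)]
      have h2 : Real.exp (2 * ρ * x) ≤ Real.exp (2 * β * x) + Real.exp (2 * x) :=
        exp_interp (by linarith [hρ.1]) (by linarith [hρ.2])
      have htr := Real.rpow_pos_of_pos ht0 ρ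
      calc K * ((|x + -Real.log t| + Real.pi) * (Real.exp (2 * ρ * x) / (t ^ ρ) ^ 2 *
            Real.exp (-(δ * Real.exp x)))) ≤ K * (((1 + Real.log t) * (|x| + Real.pi)) *
            ((Real.exp (2 * β * x) + Real.exp (2 * x)) / (t ^ ρ) ^ 2 *
            Real.exp (-(δ * Real.exp x)))) := by gcongr
        _ = _ := by simp only [hQ]; ring
    refine (norm_integral_le_of_norm_le (hQi.const_mul _) (Eventually.of_forall hb)).trans ?_
    rw [integral_const_mul]
    have htr := Real.rpow_pos_of_pos ht0 ρ
    rw [div_mul_eq_mul_div]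
    gcongr ?_ / _
    nlinarith [mul_pos hK0 (show 0 < 1 + Real.log t by linarith)]

end CapEst

open CapEst in
/-- **Key derivative estimate (der), Caputo case.** For `0 < β₀ < 1` and `Re λ < 0`
there is `C > 0` such that for every `t₀ > e^{1−γ}` and `ρ ∈ [β₀, 1)` the map
`ρ ↦ E_ρ(λ t₀^ρ)` is differentiable at `ρ` and
`Re (d/dρ E_ρ(λ t₀^ρ)) < −λ₁/(|λ|² t₀^ρ) + C (1/ρ + ln t₀)/(|λ| t₀^ρ)²`,
where `λ₁ = −Re λ`. -/
theorem caputo_derivative_estimate (β₀ : ℝ) (hβ₀ : 0 < β₀) (hβ₀1 : β₀ < 1)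
    (l : ℂ) (hl : l.re < 0) :
    ∃ C : ℝ, 0 < C ∧ ∀ t₀ : ℝ, Real.exp (1 - Real.eulerMascheroniConstant) < t₀ →
      ∀ ρ ∈ Set.Ico β₀ 1,
        DifferentiableAt ℝ (fun ρ : ℝ => mittagLeffler ρ (l * ((t₀ ^ ρ : ℝ) : ℂ))) ρ ∧
        (deriv (fun ρ : ℝ => mittagLeffler ρ (l * ((t₀ ^ ρ : ℝ) : ℂ))) ρ).re <
          -(-l.re) / (‖l‖ ^ 2 * t₀ ^ ρ) +
            C * (1 / ρ + Real.log t₀) / (‖l‖ * t₀ ^ ρ) ^ 2 := by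
  have hpi := Real.pi_pos
  have hl0 : l ≠ 0 := by rintro rfl; simp at hl
  have hl' : 0 < ‖l‖ := norm_pos_iff.2 hl0
  have harg : Real.pi / 2 < |l.arg| := by
    by_contra hcon
    push Not at hcon
    rw [Complex.abs_arg_le_pi_div_two_iff] at hcon
    linarith
  have hargle := Complex.abs_arg_le_pi l
  obtain ⟨θ, h1, h2⟩ := exists_between harg
  have h3 : θ < Real.pi := by linarith
  have hθ0 : 0 < θ := by linarith
  have habs : |θ| ≤ θ := by rw [abs_of_pos hθ0]
  have hcos : Real.cos θ < 0 := Real.cos_neg_of_pi_div_two_lt_of_lt h1 (by linarith)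
  obtain ⟨c, hc⟩ : ∃ c, LB θ c l := lower hθ0 h3 h2
  obtain ⟨M₁, hM₁, H₁⟩ := ray_deriv hc hl0 hβ₀ habs h3 hcos
  obtain ⟨M₂, hM₂, H₂⟩ := ray_deriv (φ := -θ) hc hl0 hβ₀ (by rwa [abs_neg]) h3
    (by rwa [Real.cos_neg])
  refine ⟨(M₁ + M₂) * ‖l‖ ^ 2, by positivity, fun t ht ρ hρ => ?_⟩
  have hρ0 : 0 < ρ := lt_of_lt_of_le hβ₀ hρ.1
  have ht0 : 0 < t := (Real.exp_pos _).trans ht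
  have hLt : 1 - Real.eulerMascheroniConstant < Real.log t := by
    rwa [Real.lt_log_iff_exp_lt ht0]
  have hL0 : 0 < Real.log t := by
    linarith [Real.eulerMascheroniConstant_lt_two_thirds]
  have ht1 : 1 < t := by rwa [Real.log_pos_iff ht0.le] at hL0
  obtain ⟨D₁, hD₁, hn₁⟩ := H₁ t ht1 ρ hρ
  obtain ⟨D₂, hD₂, hn₂⟩ := H₂ t ht1 ρ hρ
  obtain ⟨m, hm, hmlt⟩ := main_deriv ht0 hLt hρ0 hρ.2
  have hder := ((hm.ofReal_comp).const_mul (-(1 / l))).add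
    ((hD₁.sub hD₂).const_mul ((2 * Real.pi * Complex.I : ℂ)⁻¹))
  have hder2 : HasDerivAt (fun ρ : ℝ => mittagLeffler ρ (l * ((t ^ ρ : ℝ) : ℂ)))
      (-(1 / l) * (m : ℂ) + (2 * Real.pi * Complex.I : ℂ)⁻¹ * (D₁ - D₂)) ρ := by
    refine hder.congr_of_eventuallyEq ?_
    filter_upwards [Ioo_mem_nhds hρ0 hρ.2] with s hs
    rw [rep_main h1 h3 h2 ht0 hs.1 hs.2]
    rfl
  refine ⟨hder2.differentiableAt, ?_⟩
  rw [hder2.deriv, Complex.add_re]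
  have hT := Real.rpow_pos_of_pos ht0 ρ
  have a1 : (-(1 / l) * (m : ℂ)).re < -(-l.re) / (‖l‖ ^ 2 * t ^ ρ) := by
    have e : (-(1 / l) * (m : ℂ)).re = -l.re / ‖l‖ ^ 2 * m := by
      rw [Complex.re_mul_ofReal, one_div, Complex.neg_re, Complex.inv_re, Complex.normSq_eq_norm_sq]
      ring
    rw [e, neg_neg, ← div_div]
    rw [Real.rpow_neg ht0.le] at hmlt
    have hp : 0 < -l.re / ‖l‖ ^ 2 := div_pos (by linarith) (by positivity)
    calc -l.re / ‖l‖ ^ 2 * m < -l.re / ‖l‖ ^ 2 * -(t ^ ρ)⁻¹ := mul_lt_mul_of_pos_left hmlt hp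
      _ = _ := by ring
  have a2 : ((2 * Real.pi * Complex.I : ℂ)⁻¹ * (D₁ - D₂)).re ≤
      (M₁ + M₂) * ‖l‖ ^ 2 * (1 / ρ + Real.log t) / (‖l‖ * t ^ ρ) ^ 2 := by
    refine (Complex.re_le_norm _).trans ?_
    rw [norm_mul]
    have b1 : ‖(2 * Real.pi * Complex.I : ℂ)⁻¹‖ ≤ 1 := by
      rw [norm_inv, norm_mul, norm_mul, Complex.norm_I, Complex.norm_real,
        Real.norm_of_nonneg hpi.le]
      simp only [Complex.norm_ofNat, mul_one]
      exact inv_le_one_of_one_le₀ (by linarith [Real.pi_gt_three])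
    have b2 : ‖D₁ - D₂‖ ≤ (M₁ + M₂) * (1 + Real.log t) / (t ^ ρ) ^ 2 := by
      refine (norm_sub_le _ _).trans ((add_le_add hn₁ hn₂).trans (le_of_eq ?_))
      ring
    have b3 : 1 ≤ 1 / ρ := by rw [le_div_iff₀ hρ0]; linarith [hρ.2]
    calc _ ≤ 1 * ((M₁ + M₂) * (1 + Real.log t) / (t ^ ρ) ^ 2) := by gcongr
      _ ≤ 1 * ((M₁ + M₂) * (1 / ρ + Real.log t) / (t ^ ρ) ^ 2) := by gcongr
      _ = _ := by field_simp
  linarith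
end

section
/- Let 0 < β₀ < 1, let λ ∈ ℂ with Re λ < 0 and |Re λ| ≠ |Im λ|, write λ₁ = −Re λ > 0 and λ₂ = Im λ, and let γ denote the Euler–Mascheroni constant. Then there exists a constant C > 0 (depending only on λ and β₀) such that for every t₀ ≥ e^{1−γ}·e^{2/β₀} and every ρ ∈ [β₀, 1), the function ρ ↦ t₀^{ρ−1}·E_{ρ,ρ}(λ·t₀^ρ) is differentiable at ρ and sign(λ₁² − λ₂²) · Re(d/dρ [t₀^{ρ−1}·E_{ρ,ρ}(λ·t₀^ρ)]) ≤ −|λ₁² − λ₂²|/(|λ|⁴·t₀^{ρ+1}) + C·(1/ρ + ln t₀)/(|λ|³·t₀^{2ρ+1}). -/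
/-- The two-parameter Mittag-Leffler function with equal parameters,
`E_{β,β}(z) = ∑ₖ zᵏ / Γ(βk + β)`. -/
noncomputable def mittagLeffler2 (β : ℝ) (z : ℂ) : ℂ :=
  ∑' k : ℕ, z ^ k / Complex.Gamma (β * k + β)

section MLHelpers

open MeasureTheory Set Filter Topology Complex

lemma ml_image_exp : Real.exp '' univ = Ioi 0 := by
  rw [image_univ, Real.range_exp]

lemma ml_int (c a : ℝ) (hc : 0 < c) (ha : 0 < a) :
    Integrable (fun x : ℝ => Real.exp (-(c * Real.exp x) + a * x)) := by
  have h1 := integrableOn_rpow_mul_exp_neg_mul_rpow (p := 1) (s := a - 1) (b := c)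
    (by linarith) one_pos hc
  rw [← ml_image_exp, integrableOn_image_iff_integrableOn_abs_deriv_smul MeasurableSet.univ
    (fun x _ => (Real.hasDerivAt_exp x).hasDerivWithinAt) Real.exp_injective.injOn] at h1
  rw [← integrableOn_univ]
  refine h1.congr_fun (fun x _ => ?_) MeasurableSet.univ
  simp only [smul_eq_mul, Real.rpow_one, abs_of_pos (Real.exp_pos x)]
  rw [← Real.exp_mul, ← Real.exp_add, ← Real.exp_add]
  congr 1; ring

lemma ml_int_val (c a : ℝ) (hc : 0 < c) (ha : 0 < a) :
    ∫ x : ℝ, Real.exp (-(c * Real.exp x) + a * x) = c ^ (-a) * Real.Gamma a := by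
  have h1 := Real.integral_rpow_mul_exp_neg_mul_Ioi ha hc
  rw [← ml_image_exp, integral_image_eq_integral_abs_deriv_smul MeasurableSet.univ
    (fun x _ => (Real.hasDerivAt_exp x).hasDerivWithinAt) Real.exp_injective.injOn] at h1
  rw [Real.rpow_neg hc.le, ← Real.inv_rpow hc.le, ← one_div, ← h1, setIntegral_univ]
  refine integral_congr_ae (ae_of_all _ fun x => ?_)
  simp only [smul_eq_mul, abs_of_pos (Real.exp_pos x)]
  rw [← Real.exp_mul, ← Real.exp_add, ← Real.exp_add]
  congr 1; ring

/-- the kernel `exp (t e^w + b w)` -/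
noncomputable def mlK (t b : ℝ) (w : ℂ) : ℂ := cexp (t * cexp w + b * w)

lemma mlK_diff (t b : ℝ) : Differentiable ℂ (mlK t b) := by
  unfold mlK; fun_prop

lemma mlK_norm (t b x y : ℝ) : ‖mlK t b (x + y * I)‖ =
    Real.exp (t * (Real.exp x * Real.cos y) + b * x) := by
  unfold mlK
  rw [Complex.norm_exp]
  simp [Complex.exp_re]

lemma mlK_cont_line (t b y : ℝ) : Continuous (fun x : ℝ => mlK t b (x + y * I)) :=
  (mlK_diff t b).continuous.comp (by fun_prop)

lemma mlK_norm_le (t b x y c : ℝ) (ht : 0 < t) (hy : Real.cos y ≤ -c) : ‖mlK t b (x + y * I)‖ ≤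
    Real.exp (-(t * c * Real.exp x) + b * x) := by
  rw [mlK_norm]
  apply Real.exp_le_exp.2
  have := mul_le_mul_of_nonneg_left hy (mul_pos ht (Real.exp_pos x)).le
  nlinarith

lemma mlK_int_line (t b y c : ℝ) (ht : 0 < t) (hb : 0 < b) (hc : 0 < c) (hy : Real.cos y ≤ -c) :
    Integrable (fun x : ℝ => mlK t b (x + y * I)) :=
  (ml_int (t * c) b (by positivity) hb).mono' (mlK_cont_line t b y).aestronglyMeasurable
    (ae_of_all _ fun x => mlK_norm_le t b x y c ht hy)

lemma ml_tendsto_bot (c a : ℝ) (ha : 0 < a) :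
    Tendsto (fun x : ℝ => Real.exp (-(c * Real.exp x) + a * x)) atBot (𝓝 0) := by
  apply Real.tendsto_exp_atBot.comp
  have h1 : Tendsto (fun x : ℝ => -(c * Real.exp x)) atBot (𝓝 (-(c * 0))) :=
    (Real.tendsto_exp_atBot.const_mul c).neg
  exact h1.add_atBot (tendsto_id.const_mul_atBot ha)

lemma ml_tendsto_top (c a : ℝ) (hc : 0 < c) :
    Tendsto (fun x : ℝ => Real.exp (-(c * Real.exp x) + a * x)) atTop (𝓝 0) := by
  have h := (tendsto_rpow_mul_exp_neg_mul_atTop_nhds_zero a c hc).comp Real.tendsto_exp_atTop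
  refine h.congr fun x => ?_
  simp only [Function.comp]
  rw [← Real.exp_mul, ← Real.exp_add]
  congr 1; ring

lemma ml_side_tendsto (f : ℂ → ℂ) (p q : ℝ) (B : ℝ → ℝ) (l : Filter ℝ) (hB : Tendsto B l (𝓝 0))
    (hf : ∀ᶠ x : ℝ in l, ∀ y : ℝ, y ∈ uIcc p q → ‖f (x + y * I)‖ ≤ B x) :
    Tendsto (fun x : ℝ => ∫ y in p..q, f (x + y * I)) l (𝓝 0) := by
  have h2 : Tendsto (fun x => B x * |q - p|) l (𝓝 0) := by simpa using hB.mul_const |q - p|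
  refine squeeze_zero_norm' ?_ h2
  filter_upwards [hf] with x hx
  exact intervalIntegral.norm_integral_le_of_norm_le_const fun y hy => hx y (uIoc_subset_uIcc hy)

lemma ml_rect (f : ℂ → ℂ) (p q : ℝ) (hpq : p ≤ q)
    (hf : ∀ x y : ℝ, y ∈ Icc p q → DifferentiableAt ℂ f (x + y * I)) (M N : ℝ) :
    (∫ x in M..N, f (x + q * I)) - (∫ x in M..N, f (x + p * I)) =
      I * (∫ y in p..q, f (N + y * I)) - I * (∫ y in p..q, f (M + y * I)) := by
  have := Complex.integral_boundary_rect_eq_zero_of_differentiableOn f (M + p * I) (N + q * I) ?_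
  · simp at this
    linear_combination -this
  · intro w hw
    have h2 := hw.2
    simp [uIcc_of_le hpq] at h2
    have := hf w.re w.im h2
    rw [re_add_im] at this
    exact this.differentiableWithinAt

lemma ml_shift (f : ℂ → ℂ) (p q : ℝ) (hpq : p ≤ q) (B : ℝ → ℝ)
    (hf : ∀ x y : ℝ, y ∈ Icc p q → DifferentiableAt ℂ f (x + y * I))
    (hb : ∀ x y : ℝ, y ∈ Icc p q → ‖f (x + y * I)‖ ≤ B x)
    (hB1 : Tendsto B atTop (𝓝 0)) (hB2 : Tendsto B atBot (𝓝 0))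
    (hp : Integrable (fun x : ℝ => f (x + p * I)))
    (hq : Integrable (fun x : ℝ => f (x + q * I))) :
    ∫ x : ℝ, f (x + q * I) = ∫ x : ℝ, f (x + p * I) := by
  have h1 := intervalIntegral_tendsto_integral hp tendsto_neg_atTop_atBot tendsto_id
  have h2 := intervalIntegral_tendsto_integral hq tendsto_neg_atTop_atBot tendsto_id
  have h3 := ml_side_tendsto f p q B atTop hB1
    (Eventually.of_forall fun x y hy => hb x y (by rwa [uIcc_of_le hpq] at hy))
  have h4 := (ml_side_tendsto f p q B atBot hB2
    (Eventually.of_forall fun x y hy => hb x y (by rwa [uIcc_of_le hpq] at hy))).comp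
      tendsto_neg_atTop_atBot
  have h5 := (h3.const_mul I).sub (h4.const_mul I)
  have h6 := h2.sub h1
  have h7 := tendsto_nhds_unique (h6.congr fun N => ml_rect f p q hpq hf (-N) N)
    (by simpa using h5)
  exact sub_eq_zero.1 h7

lemma ml_deform (f : ℂ → ℂ) (p q : ℝ) (hpq : p ≤ q) (B : ℝ → ℝ) (X : ℝ)
    (hf : ∀ x y : ℝ, y ∈ Icc p q → DifferentiableAt ℂ f (x + y * I))
    (hb : ∀ x y : ℝ, x ≤ X → y ∈ Icc p q → ‖f (x + y * I)‖ ≤ B x)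
    (hB2 : Tendsto B atBot (𝓝 0))
    (hp : Integrable (fun x : ℝ => f (x + p * I)))
    (hq : Integrable (fun x : ℝ => f (x + q * I))) :
    (∫ x : ℝ, f (x + q * I)) - (∫ x : ℝ, f (x + p * I)) =
      (∫ x in Ioi X, f (x + q * I)) - (∫ x in Ioi X, f (x + p * I))
        + I * ∫ y in p..q, f (X + y * I) := by
  have h1 := intervalIntegral_tendsto_integral_Iic X hp.integrableOn tendsto_id
  have h2 := intervalIntegral_tendsto_integral_Iic X hq.integrableOn tendsto_id
  have h4 := ml_side_tendsto f p q B atBot hB2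
    ((eventually_le_atBot X).mono fun x hx y hy => hb x y hx (by rwa [uIcc_of_le hpq] at hy))
  have h5 := (tendsto_const_nhds (x := I * ∫ y in p..q, f (X + y * I))).sub (h4.const_mul I)
  have h6 := h2.sub h1
  have h7 := tendsto_nhds_unique (h6.congr fun N => ml_rect f p q hpq hf N X)
    (by simpa using h5)
  have e1 := intervalIntegral.integral_Iic_add_Ioi (b := X) hp.integrableOn hp.integrableOn
  have e2 := intervalIntegral.integral_Iic_add_Ioi (b := X) hq.integrableOn hq.integrableOn
  rw [← e1, ← e2, ← h7]; ring

lemma ml_cos_le {φ y c : ℝ} (h0 : 0 ≤ φ) (hc : Real.cos φ = -c) (hy : y ∈ Icc φ Real.pi) :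
    Real.cos y ≤ -c := by
  rw [← hc]; exact Real.cos_le_cos_of_nonneg_of_le_pi h0 hy.2 hy.1

lemma mlK_conj (t b x y : ℝ) : mlK t b (x + ((-y : ℝ) : ℂ) * I) =
    (starRingEnd ℂ) (mlK t b (x + y * I)) := by
  unfold mlK
  rw [← Complex.exp_conj]
  simp [← Complex.exp_conj]

lemma mlK_pi (t b x : ℝ) : mlK t b (x + (Real.pi : ℂ) * I) =
    ((Real.exp (-(t * Real.exp x) + b * x) : ℝ) : ℂ) * cexp (b * Real.pi * I) := by
  unfold mlK
  push_cast
  rw [← Complex.exp_add, Complex.exp_add x, Complex.exp_pi_mul_I]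
  congr 1; ring

lemma ml_ray_up (t b φ c : ℝ) (ht : 0 < t) (hb : 0 < b) (hc : 0 < c) (h0 : 0 ≤ φ)
    (hφ : φ ≤ Real.pi) (hcos : Real.cos φ = -c) :
    ∫ x : ℝ, mlK t b (x + φ * I) =
      ((t ^ (-b) * Real.Gamma b : ℝ) : ℂ) * cexp (b * Real.pi * I) := by
  have hB := ml_shift (mlK t b) φ Real.pi hφ (fun x => Real.exp (-(t * c * Real.exp x) + b * x))
    (fun x y _ => mlK_diff t b _)
    (fun x y hy => mlK_norm_le t b x y c ht (ml_cos_le h0 hcos hy))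
    (ml_tendsto_top _ _ (by positivity)) (ml_tendsto_bot _ _ hb)
    (mlK_int_line t b φ c ht hb hc hcos.le)
    (mlK_int_line t b Real.pi c ht hb hc (ml_cos_le h0 hcos ⟨hφ, le_rfl⟩))
  rw [← hB]
  simp_rw [mlK_pi]
  rw [integral_mul_const, integral_complex_ofReal, ml_int_val t b ht hb]

lemma ml_ray_down (t b φ c : ℝ) (ht : 0 < t) (hb : 0 < b) (hc : 0 < c) (h0 : 0 ≤ φ)
    (hφ : φ ≤ Real.pi) (hcos : Real.cos φ = -c) :
    ∫ x : ℝ, mlK t b (x + ((-φ : ℝ) : ℂ) * I) =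
      ((t ^ (-b) * Real.Gamma b : ℝ) : ℂ) * cexp (-(b * Real.pi * I)) := by
  simp_rw [mlK_conj]
  rw [integral_conj, ml_ray_up t b φ c ht hb hc h0 hφ hcos, map_mul, conj_ofReal, ← exp_conj]
  simp

lemma ml_ray (t b φ c : ℝ) (ht : 0 < t) (hb : 0 < b) (hc : 0 < c) (h0 : 0 ≤ φ)
    (hφ : φ ≤ Real.pi) (hcos : Real.cos φ = -c) :
    (∫ x : ℝ, mlK t b (x + φ * I)) - (∫ x : ℝ, mlK t b (x + ((-φ : ℝ) : ℂ) * I)) =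
      2 * I * ((t ^ (-b) * Real.Gamma b * Real.sin (Real.pi * b) : ℝ) : ℂ) := by
  rw [ml_ray_up t b φ c ht hb hc h0 hφ hcos, ml_ray_down t b φ c ht hb hc h0 hφ hcos]
  push_cast
  rw [Complex.sin, neg_mul, show (b : ℂ) * Real.pi * I = Real.pi * b * I by ring]
  linear_combination -((t ^ (-b) : ℝ) : ℂ) * (Real.Gamma b : ℂ) *
    (cexp (-(Real.pi * b * I)) - cexp (Real.pi * b * I)) * I_mul_I

noncomputable def mlH (φ X : ℝ) (f : ℂ → ℂ) : ℂ :=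
  (∫ x in Ioi X, f (x + φ * I)) - (∫ x in Ioi X, f (x + ((-φ : ℝ) : ℂ) * I))
        + I * ∫ y in (-φ)..φ, f (X + y * I)

lemma mlH_base (t a φ c X : ℝ) (ht : 0 < t) (ha : 0 < a) (ha1 : a < 1) (hc : 0 < c) (h0 : 0 ≤ φ)
    (hφ : φ ≤ Real.pi) (hcos : Real.cos φ = -c) :
    mlH φ X (mlK t (1 - a)) = 2 * Real.pi * I * ((t ^ (a - 1) / Real.Gamma a : ℝ) : ℂ) := by
  have h := ml_deform (mlK t (1 - a)) (-φ) φ (by linarith)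
    (fun x => Real.exp (-(-t * Real.exp x) + (1 - a) * x)) X
    (fun x y _ => mlK_diff t _ _)
    (fun x y _ _ => by
      rw [mlK_norm]
      apply Real.exp_le_exp.2
      have := mul_le_mul_of_nonneg_left (Real.cos_le_one y) (mul_pos ht (Real.exp_pos x)).le
      nlinarith)
    (ml_tendsto_bot _ _ (by linarith))
    (mlK_int_line t _ (-φ) c ht (by linarith) hc (by rw [Real.cos_neg]; exact hcos.le))
    (mlK_int_line t _ φ c ht (by linarith) hc hcos.le)
  unfold mlH
  rw [← h, ml_ray t (1 - a) φ c ht (by linarith) hc h0 hφ hcos]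
  have hr := Real.Gamma_mul_Gamma_one_sub a
  have hs : Real.sin (Real.pi * a) ≠ 0 :=
    (Real.sin_pos_of_pos_of_lt_pi (by positivity) (by nlinarith [Real.pi_pos])).ne'
  have hG := (Real.Gamma_pos_of_pos ha).ne'
  have : Real.sin (Real.pi * (1 - a)) = Real.sin (Real.pi * a) := by
    rw [mul_sub, mul_one, Real.sin_pi_sub]
  rw [this]
  have h2 : t ^ (-(1 - a)) * Real.Gamma (1 - a) * Real.sin (Real.pi * a) =
      Real.pi * (t ^ (a - 1) / Real.Gamma a) := by
    rw [neg_sub]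
    rw [eq_div_iff hs] at hr
    generalize Real.sin (Real.pi * a) = S at hr hs ⊢
    rw [← hr]
    field_simp
  rw [h2]; push_cast; ring

lemma ml_intOn (c a X : ℝ) (hc : 0 < c) :
    IntegrableOn (fun x : ℝ => Real.exp (-(c * Real.exp x) + a * x)) (Ioi X) := by
  have h := ((ml_int c (|a| + 1) hc (by positivity)).const_mul
    (Real.exp ((a - (|a| + 1)) * X))).integrableOn (s := Ioi X)
  refine h.mono' (by fun_prop) ?_
  refine (ae_restrict_iff' measurableSet_Ioi).2 (ae_of_all _ fun x hx => ?_)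
  rw [Real.norm_eq_abs, abs_of_pos (Real.exp_pos _), ← Real.exp_add]
  apply Real.exp_le_exp.2
  have : X < x := hx
  nlinarith [le_abs_self a]

lemma mlK_intOn (t b y c X : ℝ) (ht : 0 < t) (hc : 0 < c) (hy : Real.cos y ≤ -c) :
    IntegrableOn (fun x : ℝ => mlK t b (x + y * I)) (Ioi X) :=
  (ml_intOn (t * c) b X (by positivity)).mono' (mlK_cont_line t b y).aestronglyMeasurable
    (ae_of_all _ fun x => mlK_norm_le t b x y c ht hy)

lemma mlK_tendsto (t b y c : ℝ) (ht : 0 < t) (hc : 0 < c) (hy : Real.cos y ≤ -c) :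
    Tendsto (fun x : ℝ => mlK t b (x + y * I)) atTop (𝓝 0) :=
  squeeze_zero_norm (fun x => mlK_norm_le t b x y c ht hy) (ml_tendsto_top _ _ (by positivity))

lemma mlK_deriv (t a : ℝ) (w : ℂ) :
    HasDerivAt (mlK t (-a)) (t * mlK t (1 - a) w - a * mlK t (-a) w) w := by
  have h : HasDerivAt (fun w : ℂ => (t : ℂ) * cexp w + ((-a : ℝ) : ℂ) * w)
      (t * cexp w + ((-a : ℝ) : ℂ) * 1) w :=
    ((Complex.hasDerivAt_exp w).const_mul (t : ℂ)).add ((hasDerivAt_id w).const_mul _)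
  have h2 := h.cexp
  unfold mlK
  refine h2.congr_deriv ?_
  have : cexp ((t : ℂ) * cexp w + ((1 - a : ℝ) : ℂ) * w) =
      cexp ((t : ℂ) * cexp w + ((-a : ℝ) : ℂ) * w) * cexp w := by
    rw [← Complex.exp_add]; congr 1; push_cast; ring
  rw [this]; push_cast; ring

lemma ml_line_deriv (t a X y c : ℝ) (ht : 0 < t) (hc : 0 < c) (hy : Real.cos y ≤ -c) :
    t * (∫ x in Ioi X, mlK t (1 - a) (x + y * I)) - a * (∫ x in Ioi X, mlK t (-a) (x + y * I)) =
      - mlK t (-a) (X + y * I) := by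
  have i1 := (mlK_intOn t (1 - a) y c X ht hc hy).const_mul (t : ℂ)
  have i2 := (mlK_intOn t (-a) y c X ht hc hy).const_mul (a : ℂ)
  rw [← integral_const_mul, ← integral_const_mul, ← integral_sub i1 i2]
  rw [integral_Ioi_of_hasDerivAt_of_tendsto' (f := fun x : ℝ => mlK t (-a) (x + y * I)) (m := 0)]
  · simp
  · intro x _
    have h1 : HasDerivAt (fun x : ℂ => mlK t (-a) (x + y * I)) _ (x : ℂ) :=
      (mlK_deriv t a (x + y * I)).comp_add_const (x : ℂ) (y * I)
    exact h1.comp_ofReal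
  · exact i1.sub i2
  · exact mlK_tendsto t (-a) y c ht hc hy

lemma mlH_rec (t a φ c X : ℝ) (ht : 0 < t) (hc : 0 < c)
    (hcos : Real.cos φ = -c) :
    t * mlH φ X (mlK t (1 - a)) = a * mlH φ X (mlK t (-a)) := by
  have h1 := ml_line_deriv t a X φ c ht hc hcos.le
  have h2 := ml_line_deriv t a X (-φ) c ht hc (by rw [Real.cos_neg]; exact hcos.le)
  have cont : ∀ b, Continuous (fun y : ℝ => mlK t b (X + y * I)) := fun b =>
    (mlK_diff t b).continuous.comp (by fun_prop)
  have i1 : IntervalIntegrable (fun y : ℝ => I * (t * mlK t (1 - a) (X + y * I)))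
    volume (-φ) φ := Continuous.intervalIntegrable ((((cont _).const_mul _).const_mul _)) _ _
  have i2 : IntervalIntegrable (fun y : ℝ => I * (a * mlK t (-a) (X + y * I)))
    volume (-φ) φ := Continuous.intervalIntegrable ((((cont _).const_mul _).const_mul _)) _ _
  have h3 := intervalIntegral.integral_eq_sub_of_hasDerivAt (a := -φ) (b := φ)
    (f := fun y : ℝ => mlK t (-a) (X + y * I))
    (f' := fun y : ℝ => I * (t * mlK t (1 - a) (X + y * I)) - I * (a * mlK t (-a) (X + y * I)))
    (fun y _ => by
      have h0 : HasDerivAt (fun y : ℂ => (X : ℂ) + y * I) I (y : ℂ) := by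
        simpa using ((hasDerivAt_id (y : ℂ)).mul_const I).const_add (X : ℂ)
      have h1 := (HasDerivAt.comp (y : ℂ) (mlK_deriv t a (X + y * I)) h0).comp_ofReal
      refine h1.congr_deriv ?_
      ring)
    (i1.sub i2)
  rw [intervalIntegral.integral_sub i1 i2] at h3
  simp only [intervalIntegral.integral_const_mul] at h3
  unfold mlH
  linear_combination h1 - h2 + h3

lemma mlH_tendsto (t φ c X : ℝ) (ht : 0 < t) (hc : 0 < c)
    (hcos : Real.cos φ = -c) :
    ContinuousAt (fun b => mlH φ X (mlK t b)) 0 := by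
  have key : ∀ y : ℝ, Real.cos y ≤ -c →
      ContinuousAt (fun b => ∫ x in Ioi X, mlK t b (x + y * I)) 0 := by
    intro y hy
    refine continuousAt_of_dominated (bound := fun x =>
      Real.exp (-(t * c * Real.exp x) + 1 * x) + Real.exp (-(t * c * Real.exp x) + (-1) * x))
      (Eventually.of_forall fun b => (mlK_cont_line t b y).aestronglyMeasurable) ?_
      ((ml_intOn (t * c) 1 X (by positivity)).add (ml_intOn (t * c) (-1) X (by positivity))) ?_
    · filter_upwards [Metric.ball_mem_nhds (0 : ℝ) one_pos] with b hb
      refine ae_of_all _ fun x => (mlK_norm_le t b x y c ht hy).trans ?_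
      simp only [Metric.mem_ball, dist_zero_right, Real.norm_eq_abs, abs_lt] at hb
      rcases le_total 0 x with hx | hx
      · refine le_add_of_le_of_nonneg (Real.exp_le_exp.2 ?_) (Real.exp_pos _).le
        nlinarith
      · refine le_add_of_nonneg_of_le (Real.exp_pos _).le (Real.exp_le_exp.2 ?_)
        nlinarith
    · refine ae_of_all _ fun x => ?_
      unfold mlK
      fun_prop
  have h3 : ContinuousAt (fun b => ∫ y in (-φ)..φ, mlK t b (X + y * I)) 0 := by
    apply Continuous.continuousAt
    apply intervalIntegral.continuous_parametric_intervalIntegral_of_continuous'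
    unfold mlK Function.uncurry
    fun_prop
  unfold mlH
  exact ((key φ hcos.le).sub (key (-φ) (by rw [Real.cos_neg]; exact hcos.le))).add
    (continuousAt_const.mul h3)

lemma mlH_one (t φ c X : ℝ) (ht : 0 < t) (hc : 0 < c) (h0 : 0 ≤ φ)
    (hφ : φ ≤ Real.pi) (hcos : Real.cos φ = -c) :
    mlH φ X (mlK t 0) = 2 * Real.pi * I := by
  have h1 : Tendsto (fun b => mlH φ X (mlK t b)) (𝓝[>] 0) (𝓝 (mlH φ X (mlK t 0))) :=
    (mlH_tendsto t φ c X ht hc hcos).tendsto.mono_left nhdsWithin_le_nhds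
  have h2 : Tendsto (fun b : ℝ => 2 * Real.pi * I *
      ((t ^ (-b) / Real.Gamma (1 - b) : ℝ) : ℂ)) (𝓝[>] 0) (𝓝 (2 * Real.pi * I)) := by
    have hG : ContinuousAt (fun b : ℝ => Real.Gamma (1 - b)) 0 := by
      have : ContinuousAt Real.Gamma (1 - 0) :=
        (Real.differentiableAt_Gamma fun m => by
          have : (0 : ℝ) ≤ m := m.cast_nonneg
          intro h; linarith).continuousAt
      exact ContinuousAt.comp (f := fun b : ℝ => 1 - b) this (by fun_prop)
    have hP : ContinuousAt (fun b : ℝ => t ^ (-b)) 0 :=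
      (Real.continuousAt_const_rpow ht.ne').comp (f := fun b : ℝ => -b) (by fun_prop)
    have hc : ContinuousAt (fun b : ℝ => 2 * Real.pi * I *
      ((t ^ (-b) / Real.Gamma (1 - b) : ℝ) : ℂ)) 0 :=
      continuousAt_const.mul (Complex.continuous_ofReal.continuousAt.comp
        (f := fun b : ℝ => t ^ (-b) / Real.Gamma (1 - b)) (hP.div hG (by simp)))
    have := hc.tendsto.mono_left (nhdsWithin_le_nhds (s := Ioi 0))
    simpa using this
  refine tendsto_nhds_unique h1 (h2.congr' ?_)
  filter_upwards [Ioo_mem_nhdsGT (show (0 : ℝ) < 1 by norm_num)] with b hb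
  have := mlH_base t (1 - b) φ c X ht (by linarith [hb.2]) (by linarith [hb.1]) hc h0 hφ hcos
  simp only [sub_sub_cancel] at this
  rw [this]
  congr 4
  ring

lemma mlH_hankel (t φ c X : ℝ) (ht : 0 < t) (hc : 0 < c) (h0 : 0 ≤ φ)
    (hφ : φ ≤ Real.pi) (hcos : Real.cos φ = -c) (n : ℕ) : ∀ a : ℝ, 0 < a → a ≤ n + 1 →
    mlH φ X (mlK t (1 - a)) = 2 * Real.pi * I * ((t ^ (a - 1) / Real.Gamma a : ℝ) : ℂ) := by
  have base : ∀ a : ℝ, 0 < a → a ≤ 1 →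
    mlH φ X (mlK t (1 - a)) = 2 * Real.pi * I * ((t ^ (a - 1) / Real.Gamma a : ℝ) : ℂ) := by
    intro a ha ha1
    rcases ha1.lt_or_eq with h | h
    · exact mlH_base t a φ c X ht ha h hc h0 hφ hcos
    · subst h
      simp [mlH_one t φ c X ht hc h0 hφ hcos]
  induction n with
  | zero => intro a ha ha1; exact base a ha (by simpa using ha1)
  | succ n ih =>
    intro a ha ha1
    rcases le_or_gt a 1 with h | h
    · exact base a ha h
    · have h1 := ih (a - 1) (by linarith) (by push_cast at ha1; linarith)
      have h2 := mlH_rec t (a - 1) φ c X ht hc hcos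
      rw [h1, neg_sub] at h2
      have h3 : Real.Gamma a = (a - 1) * Real.Gamma (a - 1) := by
        rw [← Real.Gamma_add_one (by linarith)]; congr 1; ring
      have h4 : t ^ (a - 1) = t * t ^ (a - 1 - 1) := by
        rw [Real.rpow_sub_one ht.ne' (a - 1)]; field_simp
      have ha' : ((a - 1 : ℝ) : ℂ) ≠ 0 := by
        exact_mod_cast (by linarith : a - 1 ≠ 0)
      apply mul_left_cancel₀ ha'
      rw [← h2, h3, h4]
      have hG : (Real.Gamma (a - 1) : ℂ) ≠ 0 := by
        exact_mod_cast (Real.Gamma_pos_of_pos (by linarith)).ne'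
      push_cast at ha' ⊢
      field_simp

lemma ml_sector (l s : ℂ) (m : ℝ) (hm : 0 < m) (hm1 : m ≤ 1) (hl : l.re = -(m * ‖l‖))
    (hs : -(m / 2 * ‖s‖) ≤ s.re) : m / 10 * (‖s‖ + ‖l‖) ≤ ‖s - l‖ := by
  have h1 : s.re - l.re ≤ ‖s - l‖ := by
    have := re_le_norm (s - l); simpa using this
  have h2 : ‖s‖ - ‖l‖ ≤ ‖s - l‖ := norm_sub_norm_le s l
  have h3 := norm_nonneg s
  have h4 := norm_nonneg l
  rcases le_total (‖s‖) (3 / 2 * ‖l‖) with h | h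
  · have : 0 ≤ m * (3 / 2 * ‖l‖ - ‖s‖) := by
      apply mul_nonneg hm.le; linarith
    rw [hl] at h1
    nlinarith
  · nlinarith [mul_nonneg (sub_nonneg.2 hm1) h3, mul_nonneg (sub_nonneg.2 hm1) h4]

/-- the hypotheses on the contour -/
structure MLC (l : ℂ) (φ c κ : ℝ) : Prop where
  hc : 0 < c
  hκ : 0 < κ
  h0 : 0 ≤ φ
  hφ : φ ≤ Real.pi
  hcos : Real.cos φ = -c
  hl : 0 < ‖l‖
  hsec : ∀ s : ℂ, -(c * ‖s‖) ≤ s.re → κ * (‖s‖ + ‖l‖) ≤ ‖s - l‖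

lemma ml_norm_exp (ρ x y : ℝ) : ‖cexp (ρ * (x + y * I))‖ = Real.exp (ρ * x) := by
  rw [Complex.norm_exp]; simp

lemma MLC.den {l : ℂ} {φ c κ : ℝ} (h : MLC l φ c κ) {ρ x y : ℝ} (hρ : 0 ≤ ρ) (hρ1 : ρ ≤ 1)
    (hy : y ∈ Icc (-φ) φ) :
    κ * (Real.exp (ρ * x) + ‖l‖) ≤ ‖cexp (ρ * (x + y * I)) - l‖ := by
  have := h.hsec (cexp (ρ * (x + y * I))) ?_
  · rwa [ml_norm_exp] at this
  · rw [ml_norm_exp, Complex.exp_re]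
    have e1 : ((ρ : ℂ) * (x + y * I)).re = ρ * x := by simp
    have e2 : ((ρ : ℂ) * (x + y * I)).im = ρ * y := by simp
    rw [e1, e2]
    have : -c ≤ Real.cos (ρ * y) := by
      rw [← h.hcos, ← Real.cos_abs (ρ * y)]
      apply Real.cos_le_cos_of_nonneg_of_le_pi (abs_nonneg _) h.hφ
      rw [abs_mul, abs_of_nonneg hρ]
      have := abs_le.2 hy
      nlinarith [abs_nonneg y]
    nlinarith [Real.exp_pos (ρ * x)]

lemma MLC.den_ne {l : ℂ} {φ c κ : ℝ} (h : MLC l φ c κ) {ρ x y : ℝ} (hρ : 0 ≤ ρ) (hρ1 : ρ ≤ 1)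
    (hy : y ∈ Icc (-φ) φ) : cexp (ρ * (x + y * I)) - l ≠ 0 := by
  have := h.den hρ hρ1 hy (x := x)
  rw [← norm_pos_iff]
  have h2 := h.hκ
  have h3 := h.hl
  have h4 := Real.exp_pos (ρ * x)
  have : 0 < κ * (Real.exp (ρ * x) + ‖l‖) := by positivity
  linarith

lemma MLC.den_le {l : ℂ} {φ c κ : ℝ} (h : MLC l φ c κ) {ρ x y : ℝ} (hρ : 0 ≤ ρ) (hρ1 : ρ ≤ 1)
    (hy : y ∈ Icc (-φ) φ) : κ * ‖l‖ ≤ ‖cexp (ρ * (x + y * I)) - l‖ := by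
  have := h.den hρ hρ1 hy (x := x)
  have h4 := mul_pos h.hκ (Real.exp_pos (ρ * x))
  linarith

noncomputable def mlF (l : ℂ) (t ρ : ℝ) (w : ℂ) : ℂ := mlK t 1 w / (cexp (ρ * w) - l)

lemma MLC.F_norm {l : ℂ} {φ c κ : ℝ} (h : MLC l φ c κ) {ρ x y : ℝ} (t : ℝ)
    (hρ : 0 ≤ ρ) (hρ1 : ρ ≤ 1)
    (hy : y ∈ Icc (-φ) φ) : ‖mlF l t ρ (x + y * I)‖ ≤ ‖mlK t 1 (x + y * I)‖ * (κ * ‖l‖)⁻¹ := by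
  unfold mlF
  rw [norm_div, div_eq_mul_inv]
  gcongr
  · exact mul_pos h.hκ h.hl
  · exact h.den_le hρ hρ1 hy

lemma MLC.F_diff {l : ℂ} {φ c κ : ℝ} (h : MLC l φ c κ) {ρ x y : ℝ} (t : ℝ)
    (hρ : 0 ≤ ρ) (hρ1 : ρ ≤ 1)
    (hy : y ∈ Icc (-φ) φ) : DifferentiableAt ℂ (mlF l t ρ) (x + y * I) := by
  unfold mlF
  refine (mlK_diff t 1 _).div ?_ (h.den_ne hρ hρ1 hy)
  fun_prop

lemma MLC.F_cont {l : ℂ} {φ c κ : ℝ} (h : MLC l φ c κ) {ρ y : ℝ} (t : ℝ)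
    (hρ : 0 ≤ ρ) (hρ1 : ρ ≤ 1)
    (hy : y ∈ Icc (-φ) φ) : Continuous (fun x : ℝ => mlF l t ρ (x + y * I)) := by
  rw [continuous_iff_continuousAt]
  intro x
  exact ContinuousAt.comp (f := fun x : ℝ => (x : ℂ) + y * I)
    (h.F_diff t hρ hρ1 hy).continuousAt (by fun_prop)

lemma MLC.F_int {l : ℂ} {φ c κ : ℝ} (h : MLC l φ c κ) {ρ y : ℝ} {t : ℝ} (ht : 0 < t)
    (hρ : 0 ≤ ρ) (hρ1 : ρ ≤ 1) (hy : y ∈ Icc (-φ) φ) (hy2 : Real.cos y ≤ -c) :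
    Integrable (fun x : ℝ => mlF l t ρ (x + y * I)) :=
  ((mlK_int_line t 1 y c ht one_pos h.hc hy2).norm.mul_const (κ * ‖l‖)⁻¹).mono'
    (h.F_cont t hρ hρ1 hy).aestronglyMeasurable (ae_of_all _ fun _ => h.F_norm t hρ hρ1 hy)

lemma MLC.mem_up {l : ℂ} {φ c κ : ℝ} (h : MLC l φ c κ) : φ ∈ Icc (-φ) φ :=
  ⟨by linarith [h.h0], le_rfl⟩
lemma MLC.mem_dn {l : ℂ} {φ c κ : ℝ} (h : MLC l φ c κ) : -φ ∈ Icc (-φ) φ :=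
  ⟨le_rfl, by linarith [h.h0]⟩
lemma MLC.hcos' {l : ℂ} {φ c κ : ℝ} (h : MLC l φ c κ) : Real.cos (-φ) ≤ -c := by
  rw [Real.cos_neg, h.hcos]

lemma MLC.F_deform {l : ℂ} {φ c κ : ℝ} (h : MLC l φ c κ) {ρ t : ℝ} (ht : 0 < t)
    (hρ : 0 ≤ ρ) (hρ1 : ρ ≤ 1) (X : ℝ) :
    (∫ x : ℝ, mlF l t ρ (x + φ * I)) - (∫ x : ℝ, mlF l t ρ (x + ((-φ : ℝ) : ℂ) * I)) =
      mlH φ X (mlF l t ρ) := by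
  refine ml_deform (mlF l t ρ) (-φ) φ (by linarith [h.h0])
    (fun x => Real.exp (-(-t * Real.exp x) + 1 * x) * (κ * ‖l‖)⁻¹) X
    (fun x y hy => h.F_diff t hρ hρ1 hy) (fun x y _ hy => ?_) ?_ (h.F_int ht hρ hρ1 h.mem_dn h.hcos')
    (h.F_int ht hρ hρ1 h.mem_up h.hcos.le)
  · refine (h.F_norm t hρ hρ1 hy).trans ?_
    have := mul_pos h.hκ h.hl
    gcongr
    rw [mlK_norm]
    apply Real.exp_le_exp.2
    have := mul_le_mul_of_nonneg_left (Real.cos_le_one y) (mul_pos ht (Real.exp_pos x)).le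
    nlinarith
  · simpa using (ml_tendsto_bot (-t) 1 one_pos).mul_const (κ * ‖l‖)⁻¹

lemma mlK_term (t ρ : ℝ) (k : ℕ) (w : ℂ) :
    mlK t (1 - (ρ * k + ρ)) w = mlK t 1 w * cexp (-(ρ * w)) * cexp (-(ρ * w)) ^ k := by
  unfold mlK
  rw [← Complex.exp_nat_mul, ← Complex.exp_add, ← Complex.exp_add]
  congr 1; push_cast; ring

lemma ml_sum_path {l : ℂ} (hl : 0 < ‖l‖) (t ρ X : ℝ) (hρ : 0 < ρ) (hX : Real.exp (ρ * X) = 2 * ‖l‖)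
    (μ : Measure ℝ) (p : ℝ → ℂ) (hp : Continuous p) (hpX : ∀ᵐ x ∂μ, X ≤ (p x).re)
    (hi : Integrable (fun x => mlK t 1 (p x)) μ) :
    HasSum (fun k : ℕ => l ^ k * ∫ x, mlK t (1 - (ρ * k + ρ)) (p x) ∂μ)
      (∫ x, mlF l t ρ (p x) ∂μ) := by
  simp_rw [← integral_const_mul]
  have hbase : ∀ w : ℂ, X ≤ w.re → ‖cexp (-(ρ * w))‖ ≤ (2 * ‖l‖)⁻¹ := by
    intro w hw
    rw [Complex.norm_exp, ← hX, ← Real.exp_neg]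
    apply Real.exp_le_exp.2
    simp; nlinarith
  have hl2 : (2 * ‖l‖)⁻¹ * ‖l‖ = 1 / 2 := by field_simp
  refine hasSum_integral_of_dominated_convergence
    (fun k x => (1 / 2) ^ k * (‖mlK t 1 (p x)‖ * (2 * ‖l‖)⁻¹))
    (fun k => ?_) (fun k => ?_) ?_ ?_ ?_
  · exact ((((mlK_diff t _).continuous.comp hp)).const_mul _).aestronglyMeasurable
  · filter_upwards [hpX] with x hx
    have hb := hbase _ hx
    rw [mlK_term, norm_mul, norm_mul, norm_mul, norm_pow, norm_pow, ← hl2, mul_pow]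
    calc _ = (‖cexp (-(ρ * p x))‖ ^ k * ‖l‖ ^ k) * (‖mlK t 1 (p x)‖ * ‖cexp (-(ρ * p x))‖) := by ring
      _ ≤ _ := by gcongr
  · exact ae_of_all _ fun x => summable_geometric_two.mul_right _
  · simp_rw [tsum_mul_right]
    exact (hi.norm.mul_const _).const_mul _
  · filter_upwards [hpX] with x hx
    have hb := hbase _ hx
    have hq : ‖l * cexp (-(ρ * p x))‖ < 1 := by
      rw [norm_mul]
      calc _ ≤ ‖l‖ * (2 * ‖l‖)⁻¹ := by gcongr
        _ < 1 := by rw [mul_comm, hl2]; norm_num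
    have hg := (hasSum_geometric_of_norm_lt_one hq).mul_left (mlK t 1 (p x) * cexp (-(ρ * p x)))
    have h1 : 1 - l * cexp (-(ρ * p x)) ≠ 0 := by
      intro h0
      rw [sub_eq_zero] at h0
      rw [← h0] at hq; simp at hq
    convert! hg using 1
    · ext k
      rw [mlK_term, mul_pow]; ring
    · unfold mlF
      have h2 : cexp (ρ * p x) * cexp (-(ρ * p x)) = 1 := by
        rw [← Complex.exp_add]; simp
      have h3 : cexp (ρ * p x) - l = cexp (ρ * p x) * (1 - l * cexp (-(ρ * p x))) := by
        linear_combination l * h2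
      have h4 := Complex.exp_ne_zero (ρ * p x)
      rw [h3, Complex.exp_neg]
      rw [Complex.exp_neg] at h1
      field_simp

lemma MLC.sum {l : ℂ} {φ c κ : ℝ} (h : MLC l φ c κ) {ρ t X : ℝ} (ht : 0 < t)
    (hρ : 0 < ρ) (hX : Real.exp (ρ * X) = 2 * ‖l‖) :
    HasSum (fun k : ℕ => l ^ k * mlH φ X (mlK t (1 - (ρ * k + ρ)))) (mlH φ X (mlF l t ρ)) := by
  have key : ∀ y : ℝ, Real.cos y ≤ -c → 
    HasSum (fun k : ℕ => l ^ k * ∫ x : ℝ in Ioi X, mlK t (1 - (ρ * k + ρ)) (x + y * I))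
      (∫ x : ℝ in Ioi X, mlF l t ρ (x + y * I)) := fun y hy =>
    ml_sum_path h.hl t ρ X hρ hX (volume.restrict (Ioi X)) (fun x => x + y * I) (by fun_prop)
      ((ae_restrict_iff' measurableSet_Ioi).2 (ae_of_all _ fun x hx => by simpa using le_of_lt hx))
      (mlK_intOn t 1 y c X ht h.hc hy)
  have key2 := ml_sum_path h.hl t ρ X hρ hX (volume.restrict (Ioc (-φ) φ)) (fun y => X + y * I)
    (by fun_prop) (ae_of_all _ fun x => by simp)
    (((mlK_diff t 1).continuous.comp (by fun_prop : Continuous fun y : ℝ => (X : ℂ) + y * I)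
      ).integrableOn_Ioc)
  have hle : -φ ≤ φ := by linarith [h.h0]
  have := ((key φ h.hcos.le).sub (key (-φ) h.hcos')).add (key2.mul_left I)
  unfold mlH
  simp_rw [intervalIntegral.integral_of_le hle]
  convert! this using 1
  ext k; ring

lemma MLC.repr {l : ℂ} {φ c κ : ℝ} (h : MLC l φ c κ) {ρ t : ℝ} (ht : 0 < t)
    (hρ : 0 < ρ) (hρ1 : ρ ≤ 1) :
    2 * Real.pi * I * (((t ^ (ρ - 1) : ℝ) : ℂ) * mittagLeffler2 ρ (l * ((t ^ ρ : ℝ) : ℂ))) =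
    (∫ x : ℝ, mlF l t ρ (x + φ * I)) - (∫ x : ℝ, mlF l t ρ (x + ((-φ : ℝ) : ℂ) * I)) := by
  have hX : Real.exp (ρ * (Real.log (2 * ‖l‖) / ρ)) = 2 * ‖l‖ := by
    rw [mul_div_cancel₀ _ hρ.ne', Real.exp_log (by linarith [h.hl])]
  rw [h.F_deform ht hρ.le hρ1 (Real.log (2 * ‖l‖) / ρ), ← (h.sum ht hρ hX).tsum_eq]
  unfold mittagLeffler2
  rw [← tsum_mul_left, ← tsum_mul_left]
  congr 1
  ext k
  have hpos : 0 < ρ * k + ρ := by positivity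
  obtain ⟨n, hn⟩ := exists_nat_ge (ρ * k + ρ)
  rw [mlH_hankel t φ c _ ht h.hc h.h0 h.hφ h.hcos n (ρ * k + ρ) hpos (by linarith)]
  have e1 : t ^ (ρ * k + ρ - 1) = (t ^ ρ) ^ k * t ^ (ρ - 1) := by
    rw [← Real.rpow_natCast, ← Real.rpow_mul ht.le, ← Real.rpow_add ht]; congr 1; ring
  have e2 : Complex.Gamma (ρ * k + ρ) = ((Real.Gamma (ρ * k + ρ) : ℝ) : ℂ) := by
    rw [← Complex.Gamma_ofReal]; push_cast; rfl
  rw [e1, e2]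
  push_cast
  ring

lemma ml_int_abs (c a : ℝ) (hc : 0 < c) (ha : 1 ≤ a) :
    Integrable (fun x : ℝ => Real.exp (-(c * Real.exp x) + a * x) * (|x| + Real.pi)) := by
  have h := (((ml_int c (a + 1 / 2) hc (by linarith)).add
    (ml_int c (a - 1 / 2) hc (by linarith))).const_mul 2).add
    ((ml_int c a hc (by linarith)).mul_const Real.pi)
  refine h.mono' (by fun_prop) (ae_of_all _ fun x => ?_)
  have hpos := Real.exp_pos (-(c * Real.exp x) + a * x)
  rw [Real.norm_eq_abs, abs_of_nonneg (mul_nonneg hpos.le (by positivity))]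
  simp only [Pi.add_apply]
  have e1 : Real.exp (-(c * Real.exp x) + (a + 1 / 2) * x) =
      Real.exp (-(c * Real.exp x) + a * x) * Real.exp (x / 2) := by
    rw [← Real.exp_add]; congr 1; ring
  have e2 : Real.exp (-(c * Real.exp x) + (a - 1 / 2) * x) =
      Real.exp (-(c * Real.exp x) + a * x) * Real.exp (-(x / 2)) := by
    rw [← Real.exp_add]; congr 1; ring
  rw [e1, e2]
  have h1 : |x| ≤ 2 * (Real.exp (x / 2) + Real.exp (-(x / 2))) := by
    have a1 := Real.add_one_le_exp (x / 2)
    have a2 := Real.add_one_le_exp (-(x / 2))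
    have a3 := Real.exp_pos (x / 2)
    have a4 := Real.exp_pos (-(x / 2))
    rw [abs_le]; constructor <;> linarith
  nlinarith

noncomputable def mlA (c : ℝ) : ℝ :=
  ∫ x : ℝ, (Real.exp (-(c * Real.exp x) + 1 * x) * (|x| + Real.pi) +
    Real.exp (-(c * Real.exp x) + 3 * x) * (|x| + Real.pi))

lemma mlA_nonneg (c : ℝ) : 0 ≤ mlA c := integral_nonneg fun x => by
  have := Real.pi_pos
  simp only [Pi.zero_apply]; positivity

lemma ml_exp_interp (u a b s : ℝ) (h1 : a ≤ s) (h2 : s ≤ b) (x : ℝ) :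
    Real.exp (u + s * x) ≤ Real.exp (u + a * x) + Real.exp (u + b * x) := by
  rcases le_total 0 x with hx | hx
  · refine le_add_of_nonneg_of_le (Real.exp_pos _).le (Real.exp_le_exp.2 ?_)
    nlinarith
  · refine le_add_of_le_of_nonneg (Real.exp_le_exp.2 ?_) (Real.exp_pos _).le
    nlinarith

lemma ml_scaled (c t s : ℝ) (hc : 0 < c) (ht : 1 ≤ t) (h1 : 1 ≤ s) (h3 : s ≤ 3) :
    ∫ x : ℝ, Real.exp (-(t * c * Real.exp x) + s * x) * (|x| + Real.pi) ≤
      mlA c * (t ^ (-s) * (1 + Real.log t)) := by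
  have ht0 : 0 < t := by linarith
  have hlog := Real.log_nonneg ht
  rw [← integral_sub_right_eq_self _ (Real.log t), mlA, ← integral_mul_const]
  refine integral_mono_of_nonneg (ae_of_all _ fun x => ?_) ?_ (ae_of_all _ fun x => ?_)
  · have := Real.pi_pos
    simp only [Pi.zero_apply]; positivity
  · exact ((ml_int_abs c 1 hc le_rfl).add (ml_int_abs c 3 hc (by norm_num))).mul_const _
  · simp only
    have e1 : Real.exp (-(t * c * Real.exp (x - Real.log t)) + s * (x - Real.log t)) =
        Real.exp (-(c * Real.exp x) + s * x) * t ^ (-s) := by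
      rw [Real.rpow_def_of_pos ht0, Real.exp_sub, Real.exp_log ht0, ← Real.exp_add]
      congr 1; field_simp; ring
    rw [e1]
    have i1 := ml_exp_interp (-(c * Real.exp x)) 1 3 s h1 h3 x
    have i2 : |x - Real.log t| + Real.pi ≤ (|x| + Real.pi) * (1 + Real.log t) := by
      have := abs_sub x (Real.log t)
      rw [abs_of_nonneg hlog] at this
      nlinarith [Real.pi_gt_three, abs_nonneg x]
    have hp := Real.rpow_pos_of_pos ht0 (-s)
    calc _ ≤ ((Real.exp (-(c * Real.exp x) + 1 * x) + Real.exp (-(c * Real.exp x) + 3 * x)) *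
          t ^ (-s)) * ((|x| + Real.pi) * (1 + Real.log t)) := by
          gcongr
      _ = _ := by ring

noncomputable def mlG (l : ℂ) (t ρ : ℝ) (w : ℂ) : ℂ := mlF l t ρ w + mlK t (1 + ρ) w / l ^ 2

noncomputable def mlG' (l : ℂ) (t ρ : ℝ) (w : ℂ) : ℂ :=
  mlK t 1 w * w * (cexp (ρ * w) / l ^ 2 - cexp (ρ * w) / (cexp (ρ * w) - l) ^ 2)

lemma mlG_deriv (l : ℂ) (t ρ : ℝ) (w : ℂ) (hd : cexp (ρ * w) - l ≠ 0) :
    HasDerivAt (fun ρ : ℝ => mlG l t ρ w) (mlG' l t ρ w) ρ := by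
  have e : ∀ ρ : ℝ, mlG l t ρ w = mlK t 1 w * (cexp ((ρ : ℂ) * w) - l)⁻¹
      + mlK t 1 w * cexp ((ρ : ℂ) * w) / l ^ 2 := by
    intro ρ
    unfold mlG mlF
    rw [div_eq_mul_inv]
    congr 2
    unfold mlK
    rw [← Complex.exp_add]; congr 1; push_cast; ring
  have h0 : HasDerivAt (fun z : ℂ => cexp (z * w)) (cexp (ρ * w) * w) (ρ : ℂ) := by
    simpa using ((hasDerivAt_id (ρ : ℂ)).mul_const w).cexp
  have h1 := ((h0.sub_const l).inv hd).const_mul (mlK t 1 w)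
  have h2 := (h0.const_mul (mlK t 1 w)).div_const (l ^ 2)
  have h3 := (h1.add h2).comp_ofReal
  have h4 : (fun ρ : ℝ => mlG l t ρ w) = fun ρ : ℝ => mlK t 1 w * (cexp ((ρ : ℂ) * w) - l)⁻¹
      + mlK t 1 w * cexp ((ρ : ℂ) * w) / l ^ 2 := funext e
  rw [h4]
  refine HasDerivAt.congr_deriv h3 ?_
  unfold mlG'
  ring

lemma MLC.G'_norm {l : ℂ} {φ c κ : ℝ} (h : MLC l φ c κ) {ρ x y : ℝ} {t : ℝ} (ht : 0 < t)
    (hρ : 0 ≤ ρ) (hρ1 : ρ ≤ 1)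
    (hy : y ∈ Icc (-φ) φ) (hy2 : Real.cos y ≤ -c) :
    ‖mlG' l t ρ (x + y * I)‖ ≤ 2 / (κ ^ 2 * ‖l‖ ^ 3) *
      (Real.exp (-(t * c * Real.exp x) + (2 * ρ + 1) * x) * (|x| + Real.pi)) := by
  unfold mlG'
  set s := cexp (ρ * (x + y * I)) with hs
  have hns : ‖s‖ = Real.exp (ρ * x) := ml_norm_exp ρ x y
  have hden := h.den hρ hρ1 hy (x := x)
  have hne := h.den_ne hρ hρ1 hy (x := x)
  rw [← hs] at hden hne
  rw [← hns] at hden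
  have hl := h.hl
  have hκ := h.hκ
  have hl0 : l ≠ 0 := norm_pos_iff.1 hl
  have hs0 := norm_nonneg s
  have e1 : s / l ^ 2 - s / (s - l) ^ 2 = s * (s * (s - 2 * l)) / (l ^ 2 * (s - l) ^ 2) := by
    field_simp; ring
  have h1 : ‖s / l ^ 2 - s / (s - l) ^ 2‖ ≤ 2 / (κ ^ 2 * ‖l‖ ^ 3) * ‖s‖ ^ 2 := by
    rw [e1, norm_div, norm_mul, norm_mul, norm_mul, norm_pow, norm_pow]
    have i1 : ‖s - 2 * l‖ ≤ ‖s‖ + 2 * ‖l‖ := by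
      refine (norm_sub_le _ _).trans ?_
      rw [norm_mul]; simp
    have i2 : (κ * (‖s‖ + ‖l‖)) ^ 2 ≤ ‖s - l‖ ^ 2 := by gcongr
    calc _ ≤ ‖s‖ * (‖s‖ * (‖s‖ + 2 * ‖l‖)) / (‖l‖ ^ 2 * (κ * (‖s‖ + ‖l‖)) ^ 2) := by
          gcongr
      _ ≤ _ := by
          rw [div_mul_eq_mul_div, div_le_div_iff₀ (by positivity) (by positivity)]
          have : 0 ≤ ‖s‖ ^ 2 * ‖l‖ ^ 2 * κ ^ 2 * (2 * (‖s‖ + ‖l‖) ^ 2 - (‖s‖ + 2 * ‖l‖) * ‖l‖) := by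
            apply mul_nonneg (by positivity)
            nlinarith [mul_nonneg hs0 hl.le]
          nlinarith
  have h2 : ‖(x : ℂ) + y * I‖ ≤ |x| + Real.pi := by
    refine (norm_add_le _ _).trans ?_
    have : |y| ≤ Real.pi := (abs_le.2 hy).trans h.hφ
    simpa using this
  have h3 := mlK_norm_le t 1 x y c ht hy2
  rw [norm_mul, norm_mul]
  have e3 : Real.exp (-(t * c * Real.exp x) + (2 * ρ + 1) * x) =
      Real.exp (-(t * c * Real.exp x) + 1 * x) * ‖s‖ ^ 2 := by
    rw [hns, ← Real.exp_nat_mul, ← Real.exp_add]; congr 1; push_cast; ring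
  rw [e3]
  calc _ ≤ Real.exp (-(t * c * Real.exp x) + 1 * x) * (|x| + Real.pi) *
        (2 / (κ ^ 2 * ‖l‖ ^ 3) * ‖s‖ ^ 2) := by
        have := Real.pi_pos
        gcongr
    _ = _ := by ring

lemma MLC.line {l : ℂ} {φ c κ : ℝ} (h : MLC l φ c κ) {ρ y : ℝ} {t : ℝ} (ht : 1 ≤ t)
    (hρ : 0 < ρ) (hρ1 : ρ < 1)
    (hy : y ∈ Icc (-φ) φ) (hy2 : Real.cos y ≤ -c) :
    ∃ D : ℂ, HasDerivAt (fun ρ : ℝ => ∫ x : ℝ, mlG l t ρ (x + y * I)) D ρ ∧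
      ‖D‖ ≤ 2 / (κ ^ 2 * ‖l‖ ^ 3) * (mlA c * (t ^ (-(2 * ρ + 1)) * (1 + Real.log t))) := by
  have ht0 : 0 < t := by linarith
  have htc : 0 < t * c := mul_pos ht0 h.hc
  have hl := h.hl
  have hκ := h.hκ
  have hint : ∀ r : ℝ, 0 ≤ r → r ≤ 1 → Integrable (fun x : ℝ => mlG l t r (x + y * I)) := by
    intro r hr hr1
    exact (h.F_int ht0 hr hr1 hy hy2).add
      ((mlK_int_line t (1 + r) y c ht0 (by linarith) h.hc hy2).div_const _)
  have hmem : Ioo (0 : ℝ) 1 ∈ 𝓝 ρ := Ioo_mem_nhds hρ hρ1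
  have key := hasDerivAt_integral_of_dominated_loc_of_deriv_le (μ := volume)
    (F := fun (r : ℝ) (x : ℝ) => mlG l t r (x + y * I))
    (F' := fun (r : ℝ) (x : ℝ) => mlG' l t r (x + y * I)) (s := Ioo (0 : ℝ) 1) (x₀ := ρ)
    (bound := fun x => 2 / (κ ^ 2 * ‖l‖ ^ 3) *
      (Real.exp (-(t * c * Real.exp x) + 1 * x) * (|x| + Real.pi) +
        Real.exp (-(t * c * Real.exp x) + 3 * x) * (|x| + Real.pi)))
    hmem ?_ (hint ρ hρ.le hρ1.le) ?_ ?_ ?_ ?_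
  · refine ⟨_, key.2, ?_⟩
    have hi := (ml_int_abs (t * c) (2 * ρ + 1) htc (by linarith)).const_mul (2 / (κ ^ 2 * ‖l‖ ^ 3))
    refine (norm_integral_le_of_norm_le hi (ae_of_all _ fun x =>
      h.G'_norm ht0 hρ.le hρ1.le hy hy2)).trans ?_
    rw [integral_const_mul]
    gcongr
    exact ml_scaled c t _ h.hc ht (by linarith) (by linarith)
  · filter_upwards [hmem] with r hr
    exact (hint r hr.1.le hr.2.le).aestronglyMeasurable
  · apply Continuous.aestronglyMeasurable
    unfold mlG'
    have c1 : Continuous (fun x : ℝ => (x : ℂ) + y * I) := by fun_prop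
    have c2 : Continuous (fun x : ℝ => cexp (ρ * ((x : ℂ) + y * I))) := by fun_prop
    exact ((mlK_cont_line t 1 y).mul c1).mul ((c2.div_const _).sub
      (c2.div ((c2.sub continuous_const).pow 2) fun x => pow_ne_zero 2 (h.den_ne hρ.le hρ1.le hy)))
  · refine ae_of_all _ fun x r hr => (h.G'_norm ht0 hr.1.le hr.2.le hy hy2).trans ?_
    have i1 := ml_exp_interp (-(t * c * Real.exp x)) 1 3 (2 * r + 1) (by linarith [hr.1])
      (by linarith [hr.2]) x
    have := Real.pi_pos
    rw [← add_mul]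
    gcongr
  · exact ((ml_int_abs (t * c) 1 htc le_rfl).add (ml_int_abs (t * c) 3 htc
      (by norm_num))).const_mul _
  · exact ae_of_all _ fun x r hr => mlG_deriv l t r _ (h.den_ne hr.1.le hr.2.le hy)

noncomputable def mlg (t ρ : ℝ) : ℝ := t ^ (-(1 + ρ)) * (ρ / Real.Gamma (1 - ρ))

lemma MLC.repr2 {l : ℂ} {φ c κ : ℝ} (h : MLC l φ c κ) {ρ t : ℝ} (ht : 0 < t)
    (hρ : 0 < ρ) (hρ1 : ρ < 1) :
    ((t ^ (ρ - 1) : ℝ) : ℂ) * mittagLeffler2 ρ (l * ((t ^ ρ : ℝ) : ℂ)) =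
    (2 * Real.pi * I)⁻¹ * ((∫ x : ℝ, mlG l t ρ (x + φ * I)) -
      (∫ x : ℝ, mlG l t ρ (x + ((-φ : ℝ) : ℂ) * I))) + (l ^ 2)⁻¹ * ((mlg t ρ : ℝ) : ℂ) := by
  have h1 := h.repr ht hρ hρ1.le
  have hb : 0 < 1 + ρ := by linarith
  have h2 := ml_ray t (1 + ρ) φ c ht hb h.hc h.h0 h.hφ h.hcos
  have e1 : ∀ y : ℝ, y ∈ Icc (-φ) φ → Real.cos y ≤ -c → ∫ x : ℝ, mlG l t ρ (x + y * I) =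
      (∫ x : ℝ, mlF l t ρ (x + y * I)) + (∫ x : ℝ, mlK t (1 + ρ) (x + y * I)) / l ^ 2 := by
    intro y hy hy2
    unfold mlG
    rw [integral_add (h.F_int ht hρ.le hρ1.le hy hy2)
      ((mlK_int_line t (1 + ρ) y c ht hb h.hc hy2).div_const _), integral_div]
  rw [e1 φ h.mem_up h.hcos.le, e1 (-φ) h.mem_dn h.hcos']
  have hG := (Real.Gamma_pos_of_pos (by linarith : 0 < 1 - ρ)).ne'
  have h3 : t ^ (-(1 + ρ)) * Real.Gamma (1 + ρ) * Real.sin (Real.pi * (1 + ρ)) =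
      - (Real.pi * mlg t ρ) := by
    have hr := Real.Gamma_mul_Gamma_one_sub ρ
    have hs : Real.sin (Real.pi * ρ) ≠ 0 :=
      (Real.sin_pos_of_pos_of_lt_pi (by positivity) (by nlinarith [Real.pi_pos])).ne'
    rw [eq_div_iff hs] at hr
    unfold mlg
    rw [mul_add, mul_one, add_comm Real.pi, Real.sin_add_pi, add_comm 1 ρ,
      Real.Gamma_add_one hρ.ne']
    generalize Real.sin (Real.pi * ρ) = S at hr hs ⊢
    rw [← hr]
    field_simp
  rw [h3] at h2
  have hpi : (2 * Real.pi * I : ℂ) ≠ 0 := by simp [Real.pi_ne_zero]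
  have hl0 : l ≠ 0 := norm_pos_iff.1 h.hl
  apply mul_left_cancel₀ hpi
  rw [mul_add, mul_inv_cancel_left₀ hpi, h1]
  push_cast at h2 ⊢
  linear_combination (-(l ^ 2)⁻¹) * h2

lemma ml_Gamma_diff {x : ℝ} (hx : 0 < x) : DifferentiableAt ℝ Real.Gamma x :=
  Real.differentiableAt_Gamma fun m => by
    have : (0 : ℝ) ≤ m := m.cast_nonneg
    linarith

lemma ml_Gamma_two_deriv : deriv Real.Gamma 2 = 1 - Real.eulerMascheroniConstant := by
  have := Real.deriv_Gamma_nat 1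
  norm_num at this
  rw [this]; ring

lemma ml_psi (x : ℝ) (h0 : 0 < x) (h1 : x ≤ 1) :
    1 / x + deriv Real.Gamma x / Real.Gamma x ≤ 1 - Real.eulerMascheroniConstant := by
  have hmono := Real.convexOn_log_Gamma.monotoneOn_deriv (fun y hy =>
    (ml_Gamma_diff hy).log (Real.Gamma_pos_of_pos hy).ne')
  have hm := hmono (show x + 1 ∈ Ioi (0 : ℝ) from by simp; linarith)
    (show (2 : ℝ) ∈ Ioi (0 : ℝ) by simp) (by linarith)
  have hd : ∀ y : ℝ, 0 < y → deriv (Real.log ∘ Real.Gamma) y =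
      deriv Real.Gamma y / Real.Gamma y := fun y hy =>
    ((ml_Gamma_diff hy).hasDerivAt.log (Real.Gamma_pos_of_pos hy).ne').deriv
  rw [hd _ (by linarith), hd _ (by norm_num), ml_Gamma_two_deriv, Real.Gamma_two, div_one] at hm
  have hG := Real.Gamma_pos_of_pos h0
  have e1 : deriv Real.Gamma (x + 1) = Real.Gamma x + x * deriv Real.Gamma x := by
    have d1 : HasDerivAt (fun y : ℝ => Real.Gamma (y + 1)) (deriv Real.Gamma (x + 1)) x :=
      (ml_Gamma_diff (by linarith : 0 < x + 1)).hasDerivAt.comp_add_const x 1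
    have d2 : HasDerivAt (fun y : ℝ => y * Real.Gamma y)
        (1 * Real.Gamma x + x * deriv Real.Gamma x) x :=
      (hasDerivAt_id x).mul (ml_Gamma_diff h0).hasDerivAt
    have d3 := d2.congr_of_eventuallyEq (f₁ := fun y : ℝ => Real.Gamma (y + 1)) (by
      filter_upwards [lt_mem_nhds h0] with y hy
      exact Real.Gamma_add_one hy.ne')
    rw [d1.unique d3, one_mul]
  rw [e1, Real.Gamma_add_one h0.ne'] at hm
  convert! hm using 1
  field_simp

lemma ml_Gamma_le (x : ℝ) (h0 : 0 < x) (h1 : x ≤ 1) : Real.Gamma x ≤ 1 / x := by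
  have := Real.convexOn_Gamma.2 (show (1 : ℝ) ∈ Ioi (0 : ℝ) by simp)
    (show (2 : ℝ) ∈ Ioi (0 : ℝ) by simp) (show 0 ≤ 1 - x by linarith) h0.le (by ring)
  simp only [smul_eq_mul, Real.Gamma_one, Real.Gamma_two] at this
  rw [show (1 - x) * 1 + x * 2 = x + 1 by ring, Real.Gamma_add_one h0.ne'] at this
  rw [le_div_iff₀ h0]; linarith

lemma mlg_deriv (t ρ : ℝ) (ht : 0 < t) (hρ : 0 < ρ) (hρ1 : ρ < 1)
    (hlog : 1 - Real.eulerMascheroniConstant + 2 / ρ ≤ Real.log t) :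
    ∃ d : ℝ, HasDerivAt (mlg t) d ρ ∧ d ≤ - t ^ (-(1 + ρ)) := by
  have hx : 0 < 1 - ρ := by linarith
  have hG := Real.Gamma_pos_of_pos hx
  have d1 : HasDerivAt (fun r : ℝ => t ^ (-(1 + r))) (Real.log t * (-1) * t ^ (-(1 + ρ))) ρ :=
    (((hasDerivAt_id ρ).const_add 1).neg).const_rpow ht
  have d2 : HasDerivAt (fun r : ℝ => Real.Gamma (1 - r)) (-deriv Real.Gamma (1 - ρ)) ρ :=
    (ml_Gamma_diff hx).hasDerivAt.comp_const_sub 1 ρ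
  have d3 := d1.mul ((hasDerivAt_id ρ).div d2 hG.ne')
  refine ⟨_, d3, ?_⟩
  have h1 := ml_psi (1 - ρ) hx (by linarith)
  have h2 := ml_Gamma_le (1 - ρ) hx (by linarith)
  have hP := Real.rpow_pos_of_pos ht (-(1 + ρ))
  simp only [id]
  set P := t ^ (-(1 + ρ))
  set G := Real.Gamma (1 - ρ)
  set d := deriv Real.Gamma (1 - ρ)
  have e : Real.log t * (-1) * P * (ρ / G) + P * ((1 * G - ρ * -d) / G ^ 2) =
      - (P * ((ρ * Real.log t - 1 - ρ * (d / G)) / G)) := by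
    field_simp; ring
  refine le_of_eq_of_le e ?_
  have h3 : G ≤ ρ * Real.log t - 1 - ρ * (d / G) := by
    have a1 := mul_le_mul_of_nonneg_left hlog hρ.le
    have a2 := mul_le_mul_of_nonneg_left h1 hρ.le
    have a3 : ρ * (2 / ρ) = 2 := by field_simp
    have a4 : ρ * (1 / (1 - ρ)) = 1 / (1 - ρ) - 1 := by field_simp; ring
    rw [mul_add, a3] at a1
    rw [mul_add, a4] at a2
    linarith
  have h4 : 1 ≤ (ρ * Real.log t - 1 - ρ * (d / G)) / G := by rwa [le_div_iff₀ hG, one_mul]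
  nlinarith

lemma ml_exists_MLC (l : ℂ) (hl : l.re < 0) : ∃ φ c κ : ℝ, MLC l φ c κ := by
  have hn : 0 < ‖l‖ := norm_pos_iff.2 (by rintro rfl; simp at hl)
  have hm : 0 < -l.re / ‖l‖ := div_pos (by linarith) hn
  have hm1 : -l.re / ‖l‖ ≤ 1 := by
    rw [div_le_one hn]
    exact (neg_le_abs l.re).trans (abs_re_le_norm l)
  have hlm : l.re = -(-l.re / ‖l‖ * ‖l‖) := by field_simp
  set m := -l.re / ‖l‖
  refine ⟨Real.arccos (-(m / 2)), m / 2, m / 10, ?_⟩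
  exact ⟨by positivity, by positivity, Real.arccos_nonneg _, Real.arccos_le_pi _,
    Real.cos_arccos (by linarith) (by linarith), hn, fun s hs => ml_sector l s m hm hm1 hlm hs⟩

lemma ml_re_inv_sq (l : ℂ) : ((l ^ 2)⁻¹).re = ((-l.re) ^ 2 - l.im ^ 2) / ‖l‖ ^ 4 := by
  rw [inv_re, map_pow, normSq_eq_norm_sq]
  congr 1
  · simp [pow_two]
  · ring

lemma ml_final (l : ℂ) (φ c κ : ℝ) (h : MLC l φ c κ) (t ρ : ℝ) (hρ : 0 < ρ) (hρ1 : ρ < 1)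
    (ht : 1 ≤ t) (hlog : 1 - Real.eulerMascheroniConstant + 2 / ρ ≤ Real.log t) :
    ∃ D : ℂ, HasDerivAt (fun ρ : ℝ =>
          ((t ^ (ρ - 1) : ℝ) : ℂ) * mittagLeffler2 ρ (l * ((t ^ ρ : ℝ) : ℂ))) D ρ ∧
      Real.sign ((-l.re) ^ 2 - l.im ^ 2) * D.re ≤
          -|(-l.re) ^ 2 - l.im ^ 2| / (‖l‖ ^ 4 * t ^ (ρ + 1)) +
            (2 / κ ^ 2 * mlA c + 1) * (1 / ρ + Real.log t) / (‖l‖ ^ 3 * t ^ (2 * ρ + 1)) := by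
  have ht0 : 0 < t := by linarith
  have hn := h.hl
  have hκ := h.hκ
  have hA := mlA_nonneg c
  have hlog0 : 0 ≤ Real.log t := Real.log_nonneg ht
  obtain ⟨D₁, d1, b1⟩ := h.line ht hρ hρ1 h.mem_up h.hcos.le
  obtain ⟨D₂, d2, b2⟩ := h.line ht hρ hρ1 h.mem_dn h.hcos'
  obtain ⟨d, d3, b3⟩ := mlg_deriv t ρ ht0 hρ hρ1 hlog
  have key := ((d1.sub d2).const_mul ((2 * Real.pi * I : ℂ)⁻¹)).add
    ((d3.ofReal_comp).const_mul ((l ^ 2)⁻¹))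
  refine ⟨_, key.congr_of_eventuallyEq ?_, ?_⟩
  · filter_upwards [Ioo_mem_nhds hρ hρ1] with r hr
    exact h.repr2 ht0 hr.1 hr.2
  set B := 2 / (κ ^ 2 * ‖l‖ ^ 3) * (mlA c * (t ^ (-(2 * ρ + 1)) * (1 + Real.log t))) with hB
  set σ := (-l.re) ^ 2 - l.im ^ 2 with hσ
  set R := (2 * Real.pi * I : ℂ)⁻¹ * (D₁ - D₂) with hR
  have hB0 : 0 ≤ B := (norm_nonneg _).trans b1
  have hRn : ‖R‖ ≤ B := by
    have e1 : ‖(2 * Real.pi * I : ℂ)⁻¹‖ = (2 * Real.pi)⁻¹ := by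
      simp [abs_of_pos Real.pi_pos]
    rw [hR, norm_mul, e1, inv_mul_le_iff₀ (by positivity)]
    have := norm_sub_le D₁ D₂
    nlinarith [Real.pi_gt_three]
  have hs1 : Real.sign σ * R.re ≤ B := by
    have : |R.re| ≤ B := (abs_re_le_norm R).trans hRn
    rcases abs_le.1 this with ⟨a, b⟩
    rcases Real.sign_apply_eq σ with h | h | h <;> rw [h] <;> linarith
  have hs2 : Real.sign σ * σ = |σ| := by
    rcases lt_trichotomy σ 0 with h | h | h
    · rw [Real.sign_of_neg h, abs_of_neg h]; ring
    · rw [h]; simp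
    · rw [Real.sign_of_pos h, abs_of_pos h]; ring
  have hre : (R + (l ^ 2)⁻¹ * (d : ℂ)).re = R.re + σ / ‖l‖ ^ 4 * d := by
    rw [add_re, re_mul_ofReal, ml_re_inv_sq]
  rw [hre, mul_add]
  have e2 : Real.sign σ * (σ / ‖l‖ ^ 4 * d) = |σ| / ‖l‖ ^ 4 * d := by
    rw [← hs2]; ring
  rw [e2, add_comm]
  apply add_le_add
  · have : |σ| / ‖l‖ ^ 4 * d ≤ |σ| / ‖l‖ ^ 4 * (- t ^ (-(1 + ρ))) :=
      mul_le_mul_of_nonneg_left b3 (by positivity)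
    refine this.trans (le_of_eq ?_)
    rw [Real.rpow_neg ht0.le, add_comm 1 ρ]
    have := Real.rpow_pos_of_pos ht0 (ρ + 1)
    field_simp
  · refine hs1.trans ?_
    have h1 : 1 ≤ 1 / ρ := by rw [le_div_iff₀ hρ]; linarith
    have hP := Real.rpow_pos_of_pos ht0 (2 * ρ + 1)
    have e3 : B = (2 / κ ^ 2 * mlA c) * (1 + Real.log t) / (‖l‖ ^ 3 * t ^ (2 * ρ + 1)) := by
      rw [hB, Real.rpow_neg ht0.le]
      field_simp
    rw [e3]
    gcongr
    linarith

end MLHelpers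

/-- **Key derivative estimate, Riemann-Liouville case.** For `0 < β₀ < 1`,
`Re λ < 0` and `|Re λ| ≠ |Im λ|`, there is `C > 0` such that for every
`t₀ ≥ e^{1−γ} e^{2/β₀}` and `ρ ∈ [β₀, 1)` the map
`ρ ↦ t₀^{ρ−1} E_{ρ,ρ}(λ t₀^ρ)` is differentiable at `ρ` and
`sign(λ₁² − λ₂²) · Re (d/dρ [t₀^{ρ−1} E_{ρ,ρ}(λ t₀^ρ)]) ≤
  −|λ₁² − λ₂²|/(|λ|⁴ t₀^{ρ+1}) + C (1/ρ + ln t₀)/(|λ|³ t₀^{2ρ+1})`,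
where `λ₁ = −Re λ` and `λ₂ = Im λ`. -/
theorem riemann_liouville_derivative_estimate (β₀ : ℝ) (hβ₀ : 0 < β₀) (hβ₀1 : β₀ < 1)
    (l : ℂ) (hl : l.re < 0) (hl' : |l.re| ≠ |l.im|) :
    ∃ C : ℝ, 0 < C ∧ ∀ t₀ : ℝ,
      Real.exp (1 - Real.eulerMascheroniConstant) * Real.exp (2 / β₀) ≤ t₀ →
      ∀ ρ ∈ Set.Ico β₀ 1,
        DifferentiableAt ℝ (fun ρ : ℝ =>
          ((t₀ ^ (ρ - 1) : ℝ) : ℂ) * mittagLeffler2 ρ (l * ((t₀ ^ ρ : ℝ) : ℂ))) ρ ∧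
        Real.sign ((-l.re) ^ 2 - l.im ^ 2) *
            (deriv (fun ρ : ℝ =>
              ((t₀ ^ (ρ - 1) : ℝ) : ℂ) *
                mittagLeffler2 ρ (l * ((t₀ ^ ρ : ℝ) : ℂ))) ρ).re ≤
          -|(-l.re) ^ 2 - l.im ^ 2| / (‖l‖ ^ 4 * t₀ ^ (ρ + 1)) +
            C * (1 / ρ + Real.log t₀) / (‖l‖ ^ 3 * t₀ ^ (2 * ρ + 1)) := by
  obtain ⟨φ, c, κ, h⟩ := ml_exists_MLC l hl
  have hκ := h.hκ
  have hA := mlA_nonneg c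
  refine ⟨2 / κ ^ 2 * mlA c + 1, by positivity, fun t ht ρ hρ => ?_⟩
  have hρ0 : 0 < ρ := lt_of_lt_of_le hβ₀ hρ.1
  have hγ := Real.eulerMascheroniConstant_lt_two_thirds
  rw [← Real.exp_add] at ht
  have ht0 : 0 < t := (Real.exp_pos _).trans_le ht
  have hlog := (Real.le_log_iff_exp_le ht0).2 ht
  have h2 : 2 / ρ ≤ 2 / β₀ := div_le_div_of_nonneg_left (by norm_num) hβ₀ hρ.1
  have h3 : 0 < 2 / β₀ := by positivity
  have ht1 : 1 ≤ t := by
    refine le_trans ?_ ht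
    exact Real.one_le_exp (by linarith)
  obtain ⟨D, hD, hb⟩ := ml_final l φ c κ h t ρ hρ0 hρ.2 ht1 (by linarith)
  refine ⟨hD.differentiableAt, ?_⟩
  rw [hD.deriv]
  exact hb
end
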